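/- Let N_o(F₂) denote the group of orientation-preserving homeomorphisms h of ℝ with h · F₂ · h⁻¹ = F₂. Then F₂ is a normal subgroup of N_o(F₂) and the quotient N_o(F₂)/F₂ is isomorphic to T_{2,1} × T_{2,1}; i.e., there is a short exact sequence 1 → F₂ → N_o(F₂) → T_{2,1} × T_{2,1} → 1 (the map to T_{2,1} × T_{2,1} is induced by the actions of h near −∞ and near +∞, where every element of N_o(F₂) satisfies h(x+1) = h(x)+1 for |x| sufficiently large and hence induces a homeomorphism of ℝ/ℤ at each end). -/

import Mathlib

/-!
Near `±∞` every element of `N_o(F₂)` commutes with the unit translation (`IsN.perEnds`), because it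
conjugates that translation, and so does its inverse, into `F₂`. The heart of the matter is that
every element `h` of `N_o(F₂)` is piecewise linear (`IsN.pl`); then `N_o(F₂)` consists exactly of
the elements of `PL₂(ℝ)` commuting with `x ↦ x + 1` near `±∞`.

*Rigidity.* By composing with integer translations it suffices to study `h` on `[0, 1]`. Dyadic
rationals are preserved by `h` and `h⁻¹` (`IsN.dy`). Call two standard dyadic intervals similar if
`h` looks the same on them up to an affine map whose slope is a power of two (`Sim`).

* Elements of `F₂` equal to `x ↦ x / 2` and `x ↦ (x + 1) / 2` on `[0, 1]` are conjugated by `h` to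
  piecewise linear maps; away from the breaks of those, this says that prepending a binary digit to
  the address of a short interval does not change its similarity class (`IsN.prepend`). So the class
  only depends on the last `n` digits, for some `n` (`IsN.memory`).
* If `n > 0` is minimal, the class determines the last digit (`digit`). For a tiny dyadic
  translation `τ`, the map `P = h⁻¹ τ h` lies in `F₂` and satisfies `h ∘ P = h + δ` on `[0, 1]`, so
  it preserves classes and hence last digits. Two halves of an interval mapped by `P` onto standard
  intervals can thus be merged (`merge`), and `P` maps a fixed standard interval affinely onto a
  standard interval. Since `P` is close to the identity it fixes this interval, which contradicts
  `P x > x` (`no_digit`).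
* So `n = 0`: all short standard intervals are similar, in particular each one and its two halves.
  The two scaling factors are powers of two with sum `1`, so both are `1 / 2`, and `h` maps
  midpoints to midpoints (`map_midpoint`). By continuity `h` is affine on short standard intervals,
  and its slope is a dyadic unit, that is, a power of two (`IsN.affine_unit`).

*Ends.* The germ of `h` at an end extends uniquely to a lift of an element of `T`
(`Good.exists_endMap`), which gives the homomorphism (`exists_end_hom`). It is trivial exactly when
`h` is congruent to the identity modulo `1` near both ends, that is, when `h ∈ F₂`. It is surjective
because a lift of an element of `T` near one end can be joined to the identity or to the unit
translation near the other end by an affine piece of slope two (`exists_of_memT`).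
-/

noncomputable section

/-- `ℤ[1/n]` realized as a subset of `ℝ`: all reals of the form `a * n^b` with `a b : ℤ`. -/
def zpows (n : ℕ) : Set ℝ := {x : ℝ | ∃ a b : ℤ, x = (a : ℝ) * (n : ℝ) ^ b}

/-- The defining properties of the (unique) ring homomorphism `φₙ : ℤ[1/n] → ℤ/(n-1)ℤ`,
expressed for a function `φ : ℝ → ZMod (n-1)` restricted to the subset `zpows n`. -/
def IsPhi (n : ℕ) (φ : ℝ → ZMod (n - 1)) : Prop :=
  (∀ x ∈ zpows n, ∀ y ∈ zpows n, φ (x + y) = φ x + φ y) ∧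
  (∀ x ∈ zpows n, ∀ y ∈ zpows n, φ (x * y) = φ x * φ y) ∧
  φ 1 = 1

/-- `B` is a discrete subset of `ℝ`: every point of `ℝ` has a neighborhood containing
at most one point of `B`. -/
def LocDiscrete (B : Set ℝ) : Prop := ∀ x : ℝ, ∃ ε > 0, ∀ y ∈ B, |y - x| < ε → y = x

/-- Membership in `PLₙ(ℝ)`: an orientation-preserving homeomorphism of `ℝ`
(equivalently, a strictly monotone surjection), piecewise linear with breaks in a
discrete subset of `ℤ[1/n]`, all slopes integral powers of `n`, and mapping `ℤ[1/n]`
into itself. -/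
def MemPL (n : ℕ) (f : ℝ → ℝ) : Prop :=
  StrictMono f ∧ Function.Surjective f ∧
  (∃ B : Set ℝ, B ⊆ zpows n ∧ LocDiscrete B ∧
    ∀ x ∉ B, ∃ (k : ℤ) (c : ℝ), ∃ ε > 0, ∀ y : ℝ, |y - x| < ε → f y = (n : ℝ) ^ k * y + c) ∧
  (∀ q ∈ zpows n, f q ∈ zpows n)

/-- Membership in `BPLₙ(ℝ)`: elements of `PLₙ(ℝ)` with bounded support. -/
def MemBPL (n : ℕ) (f : ℝ → ℝ) : Prop :=
  MemPL n f ∧ ∃ M : ℝ, ∀ x : ℝ, M < |x| → f x = x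

/-- Membership in `Fₙ`: elements of `PLₙ(ℝ)` that are translation by `i(n-1)` near `+∞`
and by `j(n-1)` near `-∞`. -/
def MemF (n : ℕ) (f : ℝ → ℝ) : Prop :=
  MemPL n f ∧ ∃ (i j : ℤ) (M : ℝ),
    (∀ x : ℝ, M < x → f x = x + (i : ℝ) * ((n : ℝ) - 1)) ∧
    (∀ x : ℝ, x < -M → f x = x + (j : ℝ) * ((n : ℝ) - 1))

/-- Piecewise linearity data on the circle `ℝ/rℤ`, expressed for an `r`-periodic lift
`F : ℝ → ℝ`: there is an `r`-periodic break set `B ⊆ ℤ[1/n]`, finite in each period,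
off which `F` is locally affine with slopes integral powers of `n`. -/
def CircPL (n : ℕ) (r : ℝ) (F : ℝ → ℝ) : Prop :=
  ∃ B : Set ℝ,
    (B ∩ Set.Ico (0 : ℝ) r).Finite ∧ (∀ x ∈ B, x + r ∈ B ∧ x - r ∈ B) ∧ B ⊆ zpows n ∧
    ∀ x ∉ B, ∃ (k : ℤ) (c : ℝ), ∃ ε > 0, ∀ y : ℝ, |y - x| < ε → F y = (n : ℝ) ^ k * y + c

/-- Membership in `T_{n,r}`: an orientation-preserving homeomorphism of the circle
`S_r = ℝ/rℤ` (encoded by a strictly monotone surjective lift commuting with `x ↦ x + r`),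
piecewise linear with finitely many breaks, all breaks in `ℤ[1/n]`, all slopes integral
powers of `n`, and mapping (the image of) `ℤ[1/n]` into itself. -/
def MemT (n : ℕ) (r : ℝ) (f : AddCircle r → AddCircle r) : Prop :=
  ∃ F : ℝ → ℝ,
    (∀ x : ℝ, f (x : AddCircle r) = ((F x : ℝ) : AddCircle r)) ∧
    (∀ x : ℝ, F (x + r) = F x + r) ∧
    StrictMono F ∧ Function.Surjective F ∧ CircPL n r F ∧
    (∀ q ∈ zpows n, F q ∈ zpows n)

/-- Thompson's group `T = T_{2,1}` as a subgroup of the permutations of the circle. -/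
def Tgrp : Subgroup (Equiv.Perm (AddCircle (1 : ℝ))) :=
  Subgroup.closure {f : Equiv.Perm (AddCircle (1 : ℝ)) | MemT 2 1 ⇑f}

/-- `N_o(F₂)`: the group of orientation-preserving homeomorphisms `h` of `ℝ` with
`h F₂ h⁻¹ = F₂` (the defining set is itself closed under the group operations, so the
subgroup it generates has exactly this set as carrier). -/
def NoF2 : Subgroup (Equiv.Perm ℝ) :=
  Subgroup.closure {h : Equiv.Perm ℝ | StrictMono ⇑h ∧
    ∀ f : Equiv.Perm ℝ, MemF 2 ⇑f ↔ MemF 2 ⇑(h * f * h⁻¹)}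

section

open Filter Topology

/-! ### Dyadic rationals -/

theorem dy_iff {x : ℝ} : x ∈ zpows 2 ↔ ∃ (a : ℤ) (m : ℕ), x = a / 2 ^ m := by
  constructor
  · rintro ⟨a, b, rfl⟩
    rcases le_total 0 b with hb | hb
    · obtain ⟨n, rfl⟩ := Int.eq_ofNat_of_zero_le hb
      exact ⟨a * 2 ^ n, 0, by push_cast; simp⟩
    · obtain ⟨n, hn⟩ := Int.eq_ofNat_of_zero_le (neg_nonneg.2 hb)
      obtain rfl : b = -(n : ℤ) := by omega
      exact ⟨a, n, by simp [zpow_neg, div_eq_mul_inv]⟩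
  · rintro ⟨a, m, rfl⟩
    exact ⟨a, -(m : ℤ), by simp [zpow_neg, div_eq_mul_inv]⟩

theorem dy_int (a : ℤ) : (a : ℝ) ∈ zpows 2 := ⟨a, 0, by simp⟩

theorem dy_zpow (k : ℤ) : (2 : ℝ) ^ k ∈ zpows 2 := ⟨1, k, by simp⟩

theorem dy_mul {x y : ℝ} (hx : x ∈ zpows 2) (hy : y ∈ zpows 2) : x * y ∈ zpows 2 := by
  obtain ⟨a, m, rfl⟩ := dy_iff.1 hx
  obtain ⟨b, n, rfl⟩ := dy_iff.1 hy
  exact dy_iff.2 ⟨a * b, m + n, by push_cast; rw [pow_add]; field_simp⟩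

theorem dy_add {x y : ℝ} (hx : x ∈ zpows 2) (hy : y ∈ zpows 2) : x + y ∈ zpows 2 := by
  obtain ⟨a, m, rfl⟩ := dy_iff.1 hx
  obtain ⟨b, n, rfl⟩ := dy_iff.1 hy
  exact dy_iff.2 ⟨a * 2 ^ n + b * 2 ^ m, m + n, by push_cast; rw [pow_add]; field_simp⟩

theorem dy_neg {x : ℝ} (hx : x ∈ zpows 2) : -x ∈ zpows 2 := by
  obtain ⟨a, m, rfl⟩ := dy_iff.1 hx
  exact dy_iff.2 ⟨-a, m, by push_cast; ring⟩

theorem dy_sub {x y : ℝ} (hx : x ∈ zpows 2) (hy : y ∈ zpows 2) : x - y ∈ zpows 2 := by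
  rw [sub_eq_add_neg]; exact dy_add hx (dy_neg hy)

theorem dy_div (a : ℤ) (m : ℕ) : (a : ℝ) / 2 ^ m ∈ zpows 2 := dy_iff.2 ⟨a, m, rfl⟩

/-- A dyadic rational is an integer multiple of `2⁻ᵐ` for every sufficiently large `m`. -/
theorem dy_eventually {x : ℝ} (hx : x ∈ zpows 2) :
    ∀ᶠ m : ℕ in Filter.atTop, ∃ a : ℤ, x = a / 2 ^ m := by
  obtain ⟨a, n, rfl⟩ := dy_iff.1 hx
  filter_upwards [Filter.eventually_ge_atTop n] with m hm
  obtain ⟨r, rfl⟩ := Nat.exists_eq_add_of_le hm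
  exact ⟨a * 2 ^ r, by push_cast; rw [pow_add]; field_simp⟩

theorem exists_dy_btwn {u v : ℝ} (h : u < v) : ∃ q ∈ zpows 2, u < q ∧ q < v := by
  obtain ⟨n, hn⟩ := exists_pow_lt_of_lt_one (sub_pos.2 h) (by norm_num : (1 / 2 : ℝ) < 1)
  have hp : (0 : ℝ) < 2 ^ n := by positivity
  have hn' : 1 < (v - u) * 2 ^ n := by
    rw [one_div, inv_pow, inv_lt_iff_one_lt_mul₀ hp] at hn; exact hn
  refine ⟨(⌊u * 2 ^ n⌋ + 1 : ℤ) / 2 ^ n, dy_div _ _, ?_, ?_⟩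
  · rw [lt_div_iff₀ hp]; push_cast; exact Int.lt_floor_add_one _
  · rw [div_lt_iff₀ hp]; push_cast
    have := Int.floor_le (u * 2 ^ n)
    nlinarith

/-! ### Affine germs and piecewise linear homeomorphisms -/


/-- Along the filter `l`, the function `f` is affine with slope a power of two. -/
def AffAt (f : ℝ → ℝ) (l : Filter ℝ) : Prop :=
  ∃ (k : ℤ) (c : ℝ), ∀ᶠ y in l, f y = 2 ^ k * y + c

theorem AffAt.mono {f : ℝ → ℝ} {l l' : Filter ℝ} (h : AffAt f l) (hl : l' ≤ l) : AffAt f l' := by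
  obtain ⟨k, c, h⟩ := h
  exact ⟨k, c, hl h⟩

theorem AffAt.congr {f g : ℝ → ℝ} {l : Filter ℝ} (h : AffAt f l) (hg : ∀ᶠ y in l, g y = f y) :
    AffAt g l := by
  obtain ⟨k, c, h⟩ := h
  exact ⟨k, c, by filter_upwards [h, hg] with y h1 h2; rw [h2, h1]⟩

theorem AffAt.comp {f g : ℝ → ℝ} {l l' : Filter ℝ} (hf : AffAt f l) (hg : AffAt g l')
    (ht : Tendsto f l l') : AffAt (fun x => g (f x)) l := by
  obtain ⟨k, c, h⟩ := hf
  obtain ⟨k', c', h'⟩ := hg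
  refine ⟨k' + k, 2 ^ k' * c + c', ?_⟩
  filter_upwards [h, ht.eventually h'] with y h1 h2
  rw [h2, h1, zpow_add₀ two_ne_zero]; ring

theorem AffAt.inv {e : Equiv.Perm ℝ} {l l' : Filter ℝ} (hf : AffAt e l)
    (ht : Tendsto (⇑e⁻¹) l' l) : AffAt (⇑e⁻¹) l' := by
  obtain ⟨k, c, h⟩ := hf
  refine ⟨-k, -(2 ^ (-k) * c), ?_⟩
  filter_upwards [ht.eventually h] with y h1
  rw [show e (e⁻¹ y) = y from e.apply_symm_apply y] at h1
  have h2 : (2 : ℝ) ^ (-k) * 2 ^ k = 1 := by rw [← zpow_add₀ two_ne_zero]; simp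
  linear_combination (-(2 : ℝ) ^ (-k)) * h1 - (e⁻¹ y) * h2

theorem affAt_nhds_iff {f : ℝ → ℝ} {x : ℝ} : AffAt f (𝓝 x) ↔
    ∃ (k : ℤ) (c : ℝ), ∃ ε > 0, ∀ y : ℝ, |y - x| < ε → f y = (2 : ℝ) ^ k * y + c := by
  unfold AffAt
  simp only [Metric.eventually_nhds_iff, Real.dist_eq]

theorem aff_unique {k k' : ℤ} {c c' x : ℝ}
    (h : ∀ᶠ y in 𝓝 x, (2 : ℝ) ^ k * y + c = 2 ^ k' * y + c') : k = k' ∧ c = c' := by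
  have h1 := h.self_of_nhds
  obtain ⟨ε, he, h2⟩ := Metric.eventually_nhds_iff.1 h
  have h3 := @h2 (x + ε / 2) (by rw [Real.dist_eq, add_sub_cancel_left, abs_of_pos (half_pos he)]; linarith)
  have h4 : (2 : ℝ) ^ k = 2 ^ k' := by
    have : ((2 : ℝ) ^ k - 2 ^ k') * ε = 0 := by linarith
    rcases mul_eq_zero.1 this with h | h <;> linarith
  have h5 : k = k' := (zpow_right_strictMono₀ (by norm_num : (1 : ℝ) < 2)).injective h4
  exact ⟨h5, by rw [h4] at h1; linarith⟩

/-- A continuous function which is affine near every point of an open interval is affine on its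
closure. -/
theorem affine_on_Icc {f : ℝ → ℝ} (hf : Continuous f) {u v : ℝ} (huv : u < v)
    (h : ∀ x ∈ Set.Ioo u v, AffAt f (𝓝 x)) :
    ∃ (k : ℤ) (c : ℝ), ∀ x ∈ Set.Icc u v, f x = 2 ^ k * x + c := by
  obtain ⟨p, hp⟩ := Set.nonempty_Ioo.2 huv
  obtain ⟨k, c, hk⟩ := h p hp
  have hsub : Set.Ioo u v ⊆ {x | ∀ᶠ y in 𝓝 x, f y = 2 ^ k * y + c} := by
    refine isPreconnected_Ioo.subset_of_closure_inter_subset isOpen_setOfPred_eventually_nhds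
      ⟨p, hp, hk⟩ ?_
    rintro x ⟨hx1, hx2⟩
    obtain ⟨k', c', h'⟩ := h x hx2
    obtain ⟨z, hz1, hz2⟩ := ((mem_closure_iff_frequently.1 hx1).and_eventually
      (eventually_eventually_nhds.2 h')).exists
    have hz1' : ∀ᶠ y in 𝓝 z, f y = 2 ^ k * y + c := hz1
    obtain ⟨rfl, rfl⟩ := aff_unique (k := k) (k' := k') (c := c) (c' := c') (x := z) (by
      filter_upwards [hz1', hz2] with y h1 h2; rw [← h1, h2])
    exact h'
  refine ⟨k, c, ?_⟩
  have : Set.EqOn f (fun x => 2 ^ k * x + c) (Set.Ioo u v) :=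
    fun x hx => (hsub hx).self_of_nhds
  have h2 := this.closure hf (by fun_prop)
  rwa [closure_Ioo huv.ne] at h2

/-- `PL₂(ℝ)` described by germs: one-sided affine germs everywhere, two-sided affine germs at
non-dyadic points. -/
structure PL (f : ℝ → ℝ) : Prop where
  mono : StrictMono f
  surj : Function.Surjective f
  right : ∀ x, AffAt f (𝓝[≥] x)
  left : ∀ x, AffAt f (𝓝[≤] x)
  two : ∀ x ∉ zpows 2, AffAt f (𝓝 x)
  dy : ∀ q ∈ zpows 2, f q ∈ zpows 2

theorem mono_cont {f : ℝ → ℝ} (h : StrictMono f) (h' : Function.Surjective f) : Continuous f :=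
  h.monotone.continuous_of_surjective h'

theorem PL.cont {f : ℝ → ℝ} (h : PL f) : Continuous f := mono_cont h.mono h.surj

theorem tendsto_ge {f : ℝ → ℝ} (hc : Continuous f) (h : StrictMono f) (x : ℝ) :
    Tendsto f (𝓝[≥] x) (𝓝[≥] (f x)) :=
  tendsto_nhdsWithin_of_tendsto_nhds_of_eventually_within _ (hc.continuousAt.mono_left
    nhdsWithin_le_nhds) (eventually_mem_nhdsWithin.mono fun _ hy => h.monotone hy)

theorem tendsto_le {f : ℝ → ℝ} (hc : Continuous f) (h : StrictMono f) (x : ℝ) :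
    Tendsto f (𝓝[≤] x) (𝓝[≤] (f x)) :=
  tendsto_nhdsWithin_of_tendsto_nhds_of_eventually_within _ (hc.continuousAt.mono_left
    nhdsWithin_le_nhds) (eventually_mem_nhdsWithin.mono fun _ hy => h.monotone hy)

/-- A set is locally discrete iff every point has a punctured neighbourhood missing it. -/
theorem locDiscrete_iff {B : Set ℝ} : LocDiscrete B ↔ ∀ x, ∀ᶠ y in 𝓝[≠] x, y ∉ B := by
  unfold LocDiscrete
  refine forall_congr' fun x => ?_
  rw [eventually_nhdsWithin_iff, Metric.eventually_nhds_iff]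
  simp only [Real.dist_eq]
  refine exists_congr fun ε => and_congr_right fun _ => ?_
  constructor
  · intro h y hy hne hB; exact hne (h y hB hy)
  · intro h y hB hy; by_contra hne; exact h hy hne hB

theorem PL.punctured {f : ℝ → ℝ} (hr : ∀ x, AffAt f (𝓝[≥] x)) (hl : ∀ x, AffAt f (𝓝[≤] x))
    (x : ℝ) : ∀ᶠ y in 𝓝[≠] x, AffAt f (𝓝 y) := by
  rw [← Set.Iio_union_Ioi, nhdsWithin_union, eventually_sup]
  constructor
  · obtain ⟨k, c, h⟩ := (hl x).mono (nhdsWithin_mono x Set.Iio_subset_Iic_self)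
    filter_upwards [eventually_eventually_nhdsWithin.2 h, eventually_mem_nhdsWithin] with y hy hy'
    exact ⟨k, c, by rwa [isOpen_Iio.nhdsWithin_eq hy'] at hy⟩
  · obtain ⟨k, c, h⟩ := (hr x).mono (nhdsWithin_mono x Set.Ioi_subset_Ici_self)
    filter_upwards [eventually_eventually_nhdsWithin.2 h, eventually_mem_nhdsWithin] with y hy hy'
    exact ⟨k, c, by rwa [isOpen_Ioi.nhdsWithin_eq hy'] at hy⟩

theorem memPL_iff {f : ℝ → ℝ} : MemPL 2 f ↔ PL f := by
  constructor
  · rintro ⟨h1, h2, ⟨B, hB, hd, ha⟩, hq⟩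
    have hc := mono_cont h1 h2
    have ha' : ∀ x ∉ B, AffAt f (𝓝 x) := fun x hx => affAt_nhds_iff.2 (by simpa using ha x hx)
    refine ⟨h1, h2, fun x => ?_, fun x => ?_, fun x hx => ha' x fun h => hx (hB h), hq⟩
    · obtain ⟨ε, he, h⟩ := hd x
      obtain ⟨k, c, hk⟩ := affine_on_Icc hc (lt_add_of_pos_right x he) (fun y hy => ha' y fun hyB =>
        hy.1.ne' (h y hyB (by rw [abs_lt]; constructor <;> linarith [hy.1, hy.2])))
      exact ⟨k, c, by
        filter_upwards [Icc_mem_nhdsGE (lt_add_of_pos_right x he)] with y hy using hk y hy⟩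
    · obtain ⟨ε, he, h⟩ := hd x
      obtain ⟨k, c, hk⟩ := affine_on_Icc hc (sub_lt_self x he) (fun y hy => ha' y fun hyB =>
        hy.2.ne (h y hyB (by rw [abs_lt]; constructor <;> linarith [hy.1, hy.2])))
      exact ⟨k, c, by
        filter_upwards [Icc_mem_nhdsLE (sub_lt_self x he)] with y hy using hk y hy⟩
  · intro h
    refine ⟨h.mono, h.surj, ⟨{x | ¬ AffAt f (𝓝 x)}, fun x hx => ?_, ?_, fun x hx => ?_⟩, h.dy⟩
    · by_contra hx'; exact hx (h.two x hx')
    · rw [locDiscrete_iff]; intro x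
      filter_upwards [PL.punctured h.right h.left x] with y hy using not_not.2 hy
    · have := affAt_nhds_iff.1 (not_not.1 hx)
      simpa using this

/-- A point with dyadic image is dyadic. -/
theorem PL.dy_of {f : ℝ → ℝ} (h : PL f) {x : ℝ} (hx : f x ∈ zpows 2) : x ∈ zpows 2 := by
  by_contra hn
  obtain ⟨k, c, ε, he, hk⟩ := affAt_nhds_iff.1 (h.two x hn)
  obtain ⟨q, hq, h1, h2⟩ := exists_dy_btwn (lt_add_of_pos_right x he)
  have hfq := hk q (by rw [abs_lt]; constructor <;> linarith)
  have hfx := hk x (by simpa using he)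
  have hc : c ∈ zpows 2 := by
    have : c = f q - 2 ^ k * q := by linarith
    rw [this]; exact dy_sub (h.dy q hq) (dy_mul (dy_zpow k) hq)
  apply hn
  have h2 : (2 : ℝ) ^ (-k) * 2 ^ k = 1 := by rw [← zpow_add₀ two_ne_zero]; simp
  have : x = 2 ^ (-k) * (f x - c) := by rw [hfx]; linear_combination (-x) * h2
  rw [this]; exact dy_mul (dy_zpow _) (dy_sub hx hc)

theorem PL.comp {f g : ℝ → ℝ} (hg : PL g) (hf : PL f) : PL (fun x => g (f x)) where
  mono := hg.mono.comp hf.mono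
  surj := hg.surj.comp hf.surj
  right x := (hf.right x).comp (hg.right _) (tendsto_ge hf.cont hf.mono x)
  left x := (hf.left x).comp (hg.left _) (tendsto_le hf.cont hf.mono x)
  two x hx := (hf.two x hx).comp (hg.two _ fun h => hx (hf.dy_of h)) hf.cont.continuousAt
  dy _ hq := hg.dy _ (hf.dy _ hq)

theorem mono_inv {e : Equiv.Perm ℝ} (h : StrictMono e) : StrictMono (⇑e⁻¹) := by
  intro x y hxy
  rw [← h.lt_iff_lt]; simpa using hxy

theorem cont_inv {e : Equiv.Perm ℝ} (h : StrictMono e) : Continuous (⇑e⁻¹) :=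
  mono_cont (mono_inv h) (Equiv.surjective _)

theorem PL.inv {e : Equiv.Perm ℝ} (h : PL e) : PL (⇑e⁻¹) where
  mono := mono_inv h.mono
  surj := Equiv.surjective _
  right x := (h.right (e⁻¹ x)).inv (tendsto_ge (cont_inv h.mono) (mono_inv h.mono) x)
  left x := (h.left (e⁻¹ x)).inv (tendsto_le (cont_inv h.mono) (mono_inv h.mono) x)
  two x hx := (h.two (e⁻¹ x) (fun h' => hx (by simpa using h.dy _ h'))).inv
    (cont_inv h.mono).continuousAt
  dy _ hq := h.dy_of (by simpa using hq)

theorem pl_affine (k : ℤ) {c : ℝ} (hc : c ∈ zpows 2) : PL (fun x => 2 ^ k * x + c) := by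
  have hk : (0 : ℝ) < 2 ^ k := by positivity
  have ha : ∀ l : Filter ℝ, AffAt (fun x => 2 ^ k * x + c) l :=
    fun l => ⟨k, c, Eventually.of_forall fun _ => rfl⟩
  refine ⟨fun x y hxy => ?_, fun y => ⟨(y - c) / 2 ^ k, ?_⟩, fun _ => ha _, fun _ => ha _,
    fun _ _ => ha _, fun _ hq => dy_add (dy_mul (dy_zpow _) hq) hc⟩
  · have := mul_lt_mul_of_pos_left hxy hk
    simpa using this
  · field_simp; ring

theorem pl_translate {c : ℝ} (hc : c ∈ zpows 2) : PL (fun x => x + c) := by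
  simpa using pl_affine 0 hc

theorem pl_id : PL (fun x => x) := by
  simpa using pl_affine 0 (dy_int 0)

/-- The function equal to `f` on `(-∞, d]` and to `g` on `(d, ∞)`. -/
def glue (d : ℝ) (f g : ℝ → ℝ) (x : ℝ) : ℝ := if x ≤ d then f x else g x

theorem glue_le {d : ℝ} {f g : ℝ → ℝ} {x : ℝ} (h : x ≤ d) : glue d f g x = f x := if_pos h

theorem glue_ge {d : ℝ} {f g : ℝ → ℝ} {x : ℝ} (hfg : f d = g d) (h : d ≤ x) :
    glue d f g x = g x := by
  rcases h.eq_or_lt with rfl | h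
  · rw [glue_le le_rfl, hfg]
  · exact if_neg (not_le.2 h)

theorem PL.glue {f g : ℝ → ℝ} (hf : PL f) (hg : PL g) {d : ℝ} (hd : d ∈ zpows 2)
    (hfg : f d = g d) : PL (glue d f g) := by
  have hlt : ∀ x < d, ∀ᶠ y in 𝓝 x, _root_.glue d f g y = f y := fun x hx => by
    filter_upwards [Iio_mem_nhds hx] with y hy using glue_le (le_of_lt hy)
  have hgt : ∀ x > d, ∀ᶠ y in 𝓝 x, _root_.glue d f g y = g y := fun x hx => by
    filter_upwards [Ioi_mem_nhds hx] with y hy using glue_ge hfg (le_of_lt hy)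
  refine ⟨fun x y hxy => ?_, fun y => ?_, fun x => ?_, fun x => ?_, fun x hx => ?_, fun q hq => ?_⟩
  · rcases le_total y d with hy | hy
    · rw [glue_le hy, glue_le (hxy.le.trans hy)]; exact hf.mono hxy
    · rw [glue_ge hfg hy]
      rcases le_total x d with hx | hx
      · rw [glue_le hx]
        rcases hx.eq_or_lt with rfl | hx
        · rw [hfg]; exact hg.mono hxy
        · exact (hf.mono hx).trans_le (hfg ▸ hg.mono.monotone hy)
      · rw [glue_ge hfg hx]; exact hg.mono hxy
  · rcases le_total y (f d) with hy | hy
    · obtain ⟨x, rfl⟩ := hf.surj y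
      exact ⟨x, glue_le (hf.mono.le_iff_le.1 hy)⟩
    · obtain ⟨x, rfl⟩ := hg.surj y
      rw [hfg] at hy
      exact ⟨x, glue_ge hfg (hg.mono.le_iff_le.1 hy)⟩
  · rcases lt_or_ge x d with h | h
    · exact (hf.right x).congr (nhdsWithin_le_nhds (hlt x h))
    · exact (hg.right x).congr (eventually_mem_nhdsWithin.mono fun y hy => glue_ge hfg (h.trans hy))
  · rcases lt_or_ge d x with h | h
    · exact (hg.left x).congr (nhdsWithin_le_nhds (hgt x h))
    · exact (hf.left x).congr (eventually_mem_nhdsWithin.mono fun y hy => glue_le (le_trans hy h))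
  · rcases lt_trichotomy x d with h | rfl | h
    · exact (hf.two x hx).congr (hlt x h)
    · exact absurd hd hx
    · exact (hg.two x hx).congr (hgt x h)
  · rcases le_total q d with h | h
    · rw [glue_le h]; exact hf.dy q hq
    · rw [glue_ge hfg h]; exact hg.dy q hq

/-! ### Elements of `F₂` and of its normalizer -/

theorem memF_iff {f : ℝ → ℝ} : MemF 2 f ↔ PL f ∧ ∃ (i j : ℤ) (M : ℝ),
    (∀ x, M < x → f x = x + i) ∧ ∀ x, x < -M → f x = x + j := by
  unfold MemF
  rw [memPL_iff]
  norm_num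

/-- The condition defining `N_o(F₂)`. -/
def IsN (h : Equiv.Perm ℝ) : Prop :=
  StrictMono h ∧ ∀ f : Equiv.Perm ℝ, MemF 2 f ↔ MemF 2 ⇑(h * f * h⁻¹)

theorem isN_one : IsN 1 := ⟨strictMono_id, fun f => by simp⟩

theorem IsN.mul {g h : Equiv.Perm ℝ} (hg : IsN g) (hh : IsN h) : IsN (g * h) := by
  refine ⟨hg.1.comp hh.1, fun f => ?_⟩
  rw [hh.2 f, hg.2]
  simp only [mul_inv_rev, mul_assoc]

theorem IsN.inv {h : Equiv.Perm ℝ} (hh : IsN h) : IsN h⁻¹ := by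
  refine ⟨mono_inv hh.1, fun f => ?_⟩
  rw [hh.2 (h⁻¹ * f * h⁻¹⁻¹)]
  simp [mul_assoc]

theorem mem_NoF2 {h : Equiv.Perm ℝ} : h ∈ NoF2 ↔ IsN h := by
  refine ⟨fun hh => ?_, fun hh => Subgroup.subset_closure hh⟩
  induction hh using Subgroup.closure_induction with
  | mem x hx => exact hx
  | one => exact isN_one
  | mul x y _ _ hx hy => exact hx.mul hy
  | inv x _ hx => exact hx.inv

/-- `h` commutes with the unit translation near both ends of the line. -/
def PerEnds (h : ℝ → ℝ) : Prop := ∃ M : ℝ, ∀ x, M < |x| → h (x + 1) = h x + 1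

theorem perEnds_nat {h : ℝ → ℝ} {M : ℝ} (hh : ∀ x, M < |x| → h (x + 1) = h x + 1)
    {s : ℝ} (hs : s = 1 ∨ s = -1) (n : ℕ) {x : ℝ} (hx : M < s * x) :
    h (x + s * n) = h x + s * n := by
  induction n with
  | zero => simp
  | succ n ih =>
    have hn : (0 : ℝ) ≤ n := n.cast_nonneg
    rcases hs with rfl | rfl
    · have := hh (x + 1 * n) (lt_of_lt_of_le (by linarith) (le_abs_self _))
      push_cast
      rw [show x + 1 * ((n : ℝ) + 1) = x + 1 * n + 1 by ring, this, ih]; ring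
    · have := hh (x + -1 * (n + 1)) (lt_of_lt_of_le (by linarith) (neg_le_abs _))
      push_cast
      rw [show x + -1 * ((n : ℝ) + 1) + 1 = x + -1 * n by ring, ih] at this
      linarith

theorem perEnds_int {h : ℝ → ℝ} {M : ℝ} (hh : ∀ x, M < |x| → h (x + 1) = h x + 1)
    {s : ℝ} (hs : s = 1 ∨ s = -1) (n : ℤ) {x : ℝ} (hx : M < s * x) (hx' : M < s * (x + n)) :
    h (x + n) = h x + n := by
  have key : ∀ (n : ℕ) (x : ℝ), M < s * x → M < s * (x + n) → h (x + n) = h x + n := by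
    intro n x hx hx'
    rcases hs with rfl | rfl
    · simpa using perEnds_nat hh (Or.inl rfl) n hx
    · have := perEnds_nat hh (Or.inr rfl) n hx'
      rw [show x + n + -1 * (n : ℝ) = x by ring] at this
      linarith
  rcases le_total 0 n with hn | hn
  · obtain ⟨k, rfl⟩ := Int.eq_ofNat_of_zero_le hn
    exact_mod_cast key k x (by exact_mod_cast hx) (by exact_mod_cast hx')
  · obtain ⟨k, hk⟩ := Int.eq_ofNat_of_zero_le (neg_nonneg.2 hn)
    obtain rfl : n = -(k : ℤ) := by omega
    have := key k (x + (-(k : ℤ) : ℤ)) hx' (by push_cast; simpa using hx)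
    push_cast at this ⊢
    rw [show x + -(k : ℝ) + k = x by ring] at this
    linarith

/-- Piecewise linear homeomorphisms commuting with the unit translation near `±∞`. These turn out
to be exactly the elements of `N_o(F₂)`. -/
def Good (h : Equiv.Perm ℝ) : Prop := PL h ∧ PerEnds h

theorem exists_bound {h : ℝ → ℝ} (hm : StrictMono h) (hsurj : Function.Surjective h) (K : ℝ) :
    ∃ M : ℝ, 0 ≤ M ∧ (∀ x, M < x → K < h x) ∧ ∀ x, x < -M → h x < -K := by
  obtain ⟨a, ha⟩ := hsurj K
  obtain ⟨b, hb⟩ := hsurj (-K)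
  refine ⟨max |a| |b|, le_max_of_le_left (abs_nonneg _), fun x hx => ?_, fun x hx => ?_⟩
  · rw [← ha]; exact hm (lt_of_le_of_lt ((le_abs_self a).trans (le_max_left _ _)) hx)
  · rw [← hb]; apply hm
    have := (neg_abs_le b)
    have := le_max_right |a| |b|
    linarith

theorem exists_bound_abs {h : ℝ → ℝ} (hm : StrictMono h) (hsurj : Function.Surjective h) (K : ℝ) :
    ∃ M : ℝ, 0 ≤ M ∧ ∀ x, M < |x| → K < |h x| := by
  obtain ⟨M, h0, h1, h2⟩ := exists_bound hm hsurj K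
  refine ⟨M, h0, fun x hx => ?_⟩
  rcases lt_abs.1 hx with hx | hx
  · exact lt_abs.2 (Or.inl (h1 x hx))
  · exact lt_abs.2 (Or.inr (by linarith [h2 x (by linarith)]))

theorem Good.inv {h : Equiv.Perm ℝ} (hh : Good h) : Good h⁻¹ := by
  refine ⟨hh.1.inv, ?_⟩
  obtain ⟨M, hM⟩ := hh.2
  obtain ⟨M', h0, hM'⟩ := exists_bound_abs hh.1.inv.mono hh.1.inv.surj M
  refine ⟨M', fun x hx => ?_⟩
  have := hM _ (hM' x hx)
  rw [Equiv.Perm.inv_def, Equiv.symm_apply_eq] at *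
  rw [this]; simp

theorem Good.conj {h f : Equiv.Perm ℝ} (hh : Good h) (hf : MemF 2 f) :
    MemF 2 ⇑(h * f * h⁻¹) := by
  obtain ⟨hf, i, j, M, h1, h2⟩ := memF_iff.1 hf
  refine memF_iff.2 ⟨hh.1.comp (hf.comp hh.inv.1), i, j, ?_⟩
  obtain ⟨K, hK⟩ := hh.2
  have hK' : ∀ x, |K| < |x| → h (x + 1) = h x + 1 := fun x hx => hK x ((le_abs_self K).trans_lt hx)
  obtain ⟨M', h0, h3, h4⟩ := exists_bound hh.1.inv.mono hh.1.inv.surj (|M| + |K| + |(i : ℝ)| +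
    |(j : ℝ)|)
  have := le_abs_self M
  have := neg_abs_le (i : ℝ)
  have := le_abs_self (j : ℝ)
  have := abs_nonneg (i : ℝ)
  have := abs_nonneg (j : ℝ)
  have := abs_nonneg M
  have := abs_nonneg K
  refine ⟨M', fun x hx => ?_, fun x hx => ?_⟩
  · have h5 := h3 x hx
    change h (f (h⁻¹ x)) = x + i
    rw [h1 _ (by linarith), perEnds_int hK' (Or.inl rfl) i (by linarith)
      (by linarith)]
    simp
  · have h5 := h4 x hx
    change h (f (h⁻¹ x)) = x + j
    rw [h2 _ (by linarith), perEnds_int hK' (Or.inr rfl) j (by linarith)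
      (by linarith)]
    simp

theorem Good.isN {h : Equiv.Perm ℝ} (hh : Good h) : IsN h := by
  refine ⟨hh.1.mono, fun f => ⟨hh.conj, fun hf => ?_⟩⟩
  simpa [mul_assoc] using hh.inv.conj hf

theorem MemF.good {f : Equiv.Perm ℝ} (hf : MemF 2 f) : Good f := by
  obtain ⟨hf, i, j, M, h1, h2⟩ := memF_iff.1 hf
  refine ⟨hf, |M| + 1, fun x hx => ?_⟩
  have := le_abs_self M
  rcases lt_abs.1 hx with hx | hx
  · rw [h1 _ (by linarith), h1 _ (by linarith)]; ring
  · rw [h2 _ (by linarith), h2 _ (by linarith)]; ring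

/-- The permutation underlying a piecewise linear homeomorphism. -/
def PL.perm {f : ℝ → ℝ} (h : PL f) : Equiv.Perm ℝ := Equiv.ofBijective f ⟨h.mono.injective, h.surj⟩

theorem PL.perm_apply {f : ℝ → ℝ} (h : PL f) (x : ℝ) : h.perm x = f x := rfl

theorem trans_memF : MemF 2 ⇑(pl_translate (dy_int 1)).perm :=
  memF_iff.2 ⟨pl_translate (dy_int 1), 1, 1, 0, fun _ _ => rfl, fun _ _ => rfl⟩

/-- Every element of the normalizer commutes with the unit translation near `±∞`: it conjugates
this translation to a map which is a translation by positive integers near the ends, and the same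
applies to its inverse. -/
theorem IsN.perEnds {h : Equiv.Perm ℝ} (hh : IsN h) : PerEnds h := by
  have key : ∀ g : Equiv.Perm ℝ, IsN g → ∃ (i j : ℤ) (M : ℝ), 0 ≤ M ∧
      (∀ x, M < x → g (x + 1) = g x + i) ∧ (∀ x, x < -M → g (x + 1) = g x + j) := by
    intro g hg
    obtain ⟨_, i, j, M, h1, h2⟩ := memF_iff.1 ((hg.2 _).1 trans_memF)
    obtain ⟨M', h0, h3, h4⟩ := exists_bound hg.1 g.surjective M
    refine ⟨i, j, M', h0, fun x hx => ?_, fun x hx => ?_⟩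
    · have := h1 _ (h3 x hx)
      simpa [PL.perm_apply] using this
    · have := h2 _ (h4 x hx)
      simpa [PL.perm_apply] using this
  obtain ⟨i, j, M, h0, h1, h2⟩ := key h hh
  obtain ⟨i', j', M', h0', h1', h2'⟩ := key h⁻¹ hh.inv
  have pos : ∀ (g : Equiv.Perm ℝ), IsN g → ∀ (i : ℤ) (x : ℝ), g (x + 1) = g x + i → 1 ≤ i := by
    intro g hg i x hx
    have := hg.1 (lt_add_one x)
    rw [hx] at this
    have : (0 : ℝ) < i := by linarith
    exact_mod_cast this
  obtain ⟨K, hK0, hK1, hK2⟩ := exists_bound hh.1 h.surjective M'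
  have e1 : i = 1 := by
    have hi := pos h hh i (M + 1) (h1 _ (by linarith))
    have hi' := pos h⁻¹ hh.inv i' (M' + 1) (h1' _ (by linarith))
    by_contra hne
    have hi2 : (2 : ℝ) ≤ i := by exact_mod_cast (by omega : 2 ≤ i)
    set x := max M K + 1
    have hxM : M < x := lt_of_le_of_lt (le_max_left _ _) (lt_add_one _)
    have hxK : K < x := lt_of_le_of_lt (le_max_right _ _) (lt_add_one _)
    have a1 := h1 x hxM
    have a2 := h1' (h x) (hK1 x hxK)
    simp only [Equiv.Perm.inv_def, Equiv.symm_apply_apply] at a2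
    have a3 : h.symm (h x + 1) < h.symm (h (x + 1)) := by
      apply mono_inv hh.1; rw [a1]; linarith
    rw [a2, Equiv.symm_apply_apply] at a3
    have : (1 : ℝ) ≤ i' := by exact_mod_cast hi'
    linarith
  have e2 : j = 1 := by
    have hi := pos h hh j (-M - 1) (h2 _ (by linarith))
    have hi' := pos h⁻¹ hh.inv j' (-M' - 1) (h2' _ (by linarith))
    by_contra hne
    have hi2 : (2 : ℝ) ≤ j := by exact_mod_cast (by omega : 2 ≤ j)
    set x := -max M K - 1
    have hxM : x < -M := by have := le_max_left M K; simp only [x]; linarith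
    have hxK : x < -K := by have := le_max_right M K; simp only [x]; linarith
    have a1 := h2 x hxM
    have a2 := h2' (h x) (hK2 x hxK)
    simp only [Equiv.Perm.inv_def, Equiv.symm_apply_apply] at a2
    have a3 : h.symm (h x + 1) < h.symm (h (x + 1)) := by
      apply mono_inv hh.1; rw [a1]; linarith
    rw [a2, Equiv.symm_apply_apply] at a3
    have : (1 : ℝ) ≤ j' := by exact_mod_cast hi'
    linarith
  subst e1 e2
  refine ⟨M, fun x hx => ?_⟩
  rcases lt_abs.1 hx with hx | hx
  · simpa using h1 x hx
  · simpa using h2 x (by linarith)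

/-- Elements of the normalizer preserve dyadic rationals: `d` is dyadic as soon as some element of
`F₂` is the identity to the left of `d` but at no point just to the right of `d`. -/
theorem IsN.dy {h : Equiv.Perm ℝ} (hh : IsN h) {d : ℝ} (hd : d ∈ zpows 2) : h d ∈ zpows 2 := by
  have hd1 : d + 1 ∈ zpows 2 := dy_add hd (by simpa using dy_int 1)
  have hA : PL (fun x => 2 ^ (1 : ℤ) * x + -d) := pl_affine 1 (dy_neg hd)
  have hB : PL (fun x : ℝ => x + (1 : ℤ)) := pl_translate (dy_int 1)
  have e1 : (2 : ℝ) ^ (1 : ℤ) * (d + 1) + -d = d + 1 + (1 : ℤ) := by push_cast; rw [zpow_one]; ring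
  have hAB := hA.glue hB hd1 e1
  have e2 : d = glue (d + 1) (fun x => 2 ^ (1 : ℤ) * x + -d) (fun x : ℝ => x + (1 : ℤ)) d := by
    rw [glue_le (by linarith), zpow_one]; ring
  have hf := pl_id.glue hAB hd e2
  have hF : MemF 2 ⇑hf.perm := by
    refine memF_iff.2 ⟨hf, 1, 0, |d| + 1, fun x hx => ?_, fun x hx => ?_⟩
    · have := le_abs_self d
      rw [hf.perm_apply, glue_ge e2 (by linarith), glue_ge e1 (by linarith)]
    · have := neg_abs_le d
      rw [hf.perm_apply, glue_le (by linarith)]; simp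
  have hlt : ∀ x, d < x → x < hf.perm x := fun x hx => by
    rw [hf.perm_apply, glue_ge e2 hx.le]
    rcases le_total x (d + 1) with h | h
    · rw [glue_le h, zpow_one]; linarith
    · rw [glue_ge e1 h]; push_cast; linarith
  obtain ⟨hg, -⟩ := memF_iff.1 ((hh.2 _).1 hF)
  by_contra hn
  obtain ⟨k, c, ε, he, hk⟩ := affAt_nhds_iff.1 (hg.two _ hn)
  have hL : ∀ y, y ≤ h d → (h * hf.perm * h⁻¹) y = y := by
    intro y hy
    have h3 : h⁻¹ y ≤ d := by
      have := (mono_inv hh.1).monotone hy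
      simpa using this
    change h (hf.perm (h⁻¹ y)) = y
    rw [hf.perm_apply, glue_le h3]; simp
  have hR : ∀ y, h d < y → y < (h * hf.perm * h⁻¹) y := by
    intro y hy
    have h3 : d < h⁻¹ y := by
      have := mono_inv hh.1 hy
      simpa using this
    change y < h (hf.perm (h⁻¹ y))
    have := hh.1 (hlt _ h3)
    simpa using this
  have b0 := hk (h d) (by simpa using he)
  have b1 := hk (h d - ε / 2) (by rw [abs_lt]; constructor <;> linarith)
  have b2 := hk (h d + ε / 2) (by rw [abs_lt]; constructor <;> linarith)
  rw [hL _ le_rfl] at b0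
  rw [hL _ (by linarith)] at b1
  have b3 := hR (h d + ε / 2) (by linarith)
  rw [b2] at b3
  linarith

/-! ### Dyadic subdivision and similarity of standard intervals -/

theorem PL.finite_breaks {g : ℝ → ℝ} (hg : PL g) (u v : ℝ) :
    {y | y ∈ Set.Icc u v ∧ ¬ AffAt g (𝓝 y)}.Finite := by
  by_contra hinf
  obtain ⟨x, -, hx⟩ := Set.Infinite.exists_accPt_of_subset_isCompact hinf
    (isCompact_Icc (a := u) (b := v)) (fun y hy => hy.1)
  rw [accPt_iff_frequently] at hx
  have h2 := eventually_nhdsWithin_iff.1 (PL.punctured hg.right hg.left x)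
  obtain ⟨y, ⟨h3, h4⟩, h5⟩ := (hx.and_eventually h2).exists
  exact h4.2 (h5 h3)

/-- For `g` piecewise linear and `h` pulling back dyadics to dyadics, `g` is affine on the
`h`-images of all standard intervals of `[0, 1]` of sufficiently large level. -/
theorem grid {g : ℝ → ℝ} (hg : PL g) {h : Equiv.Perm ℝ} (hh : StrictMono h)
    (hdy : ∀ d ∈ zpows 2, h⁻¹ d ∈ zpows 2) :
    ∀ᶠ m : ℕ in atTop, ∀ a : ℤ, 0 ≤ a → a < 2 ^ m → ∃ (k : ℤ) (c : ℝ),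
      ∀ x ∈ Set.Icc ((a : ℝ) / 2 ^ m) ((a + 1) / 2 ^ m), g (h x) = 2 ^ k * h x + c := by
  have hfin := hg.finite_breaks (h 0) (h 1)
  have hev := (eventually_all_finite hfin).2 (fun y hy =>
    dy_eventually (hdy y (by by_contra hn; exact hy.2 (hg.two y hn))))
  filter_upwards [hev] with m hm a ha0 ha1
  have hp : (0 : ℝ) < 2 ^ m := by positivity
  have hlt : h ((a : ℝ) / 2 ^ m) < h (((a : ℝ) + 1) / 2 ^ m) := hh (by gcongr; linarith)
  obtain ⟨k, c, hk⟩ := affine_on_Icc hg.cont hlt (fun y hy => by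
    by_contra hn
    have ha0' : (0 : ℝ) ≤ a := by exact_mod_cast ha0
    have ha1' : (a : ℝ) + 1 ≤ 2 ^ m := by exact_mod_cast ha1
    have h0 : h 0 ≤ h ((a : ℝ) / 2 ^ m) := hh.monotone (by positivity)
    have h1 : h (((a : ℝ) + 1) / 2 ^ m) ≤ h 1 := hh.monotone (by rw [div_le_one hp]; exact ha1')
    obtain ⟨b, hb⟩ := hm y ⟨⟨h0.trans hy.1.le, hy.2.le.trans h1⟩, hn⟩
    have hyb : y = h ((b : ℝ) / 2 ^ m) := by rw [← hb]; simp
    rw [hyb] at hy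
    have h2 := hh.lt_iff_lt.1 hy.1
    have h3 := hh.lt_iff_lt.1 hy.2
    rw [div_lt_div_iff_of_pos_right hp] at h2 h3
    have h2' : a < b := by exact_mod_cast h2
    have h3' : b < a + 1 := by exact_mod_cast h3
    omega)
  exact ⟨k, c, fun x hx => hk _ ⟨hh.monotone hx.1, hh.monotone hx.2⟩⟩

/-- The standard intervals `[a/2ᵐ, (a+1)/2ᵐ]` and `[b/2ˡ, (b+1)/2ˡ]` are similar for `h` if `h`
restricted to them, both reparametrised by `[0, 1]`, agree up to postcomposition with an affine map
whose slope is a power of two. -/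
def Sim (h : ℝ → ℝ) (a : ℤ) (m : ℕ) (b : ℤ) (l : ℕ) : Prop :=
  ∃ (k : ℤ) (c : ℝ), ∀ t ∈ Set.Icc (0 : ℝ) 1, h ((b + t) / 2 ^ l) = 2 ^ k * h ((a + t) / 2 ^ m) + c

theorem Sim.refl (h : ℝ → ℝ) (a : ℤ) (m : ℕ) : Sim h a m a m := ⟨0, 0, by simp⟩

theorem Sim.symm {h : ℝ → ℝ} {a b : ℤ} {m l : ℕ} (hs : Sim h a m b l) : Sim h b l a m := by
  obtain ⟨k, c, hk⟩ := hs
  refine ⟨-k, -(2 ^ (-k) * c), fun t ht => ?_⟩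
  have h2 : (2 : ℝ) ^ (-k) * 2 ^ k = 1 := by rw [← zpow_add₀ two_ne_zero]; simp
  rw [hk t ht]
  linear_combination (-h ((a + t) / 2 ^ m)) * h2

theorem Sim.trans {h : ℝ → ℝ} {a b d : ℤ} {m l r : ℕ} (hs : Sim h a m b l) (hs' : Sim h b l d r) :
    Sim h a m d r := by
  obtain ⟨k, c, hk⟩ := hs
  obtain ⟨k', c', hk'⟩ := hs'
  refine ⟨k' + k, 2 ^ k' * c + c', fun t ht => ?_⟩
  rw [hk' t ht, hk t ht, zpow_add₀ two_ne_zero]; ring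

/-- Corresponding standard subintervals of similar intervals are similar. -/
theorem Sim.descend {h : ℝ → ℝ} {a b : ℤ} {m l : ℕ} (hs : Sim h a m b l) (r : ℕ) {w : ℤ}
    (h0 : 0 ≤ w) (h1 : w < 2 ^ r) :
    Sim h (a * 2 ^ r + w) (m + r) (b * 2 ^ r + w) (l + r) := by
  obtain ⟨k, c, hk⟩ := hs
  refine ⟨k, c, fun t ht => ?_⟩
  have h0' : (0 : ℝ) ≤ w := by exact_mod_cast h0
  have h1' : (w : ℝ) + 1 ≤ 2 ^ r := by exact_mod_cast h1
  have hp : (0 : ℝ) < 2 ^ r := by positivity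
  have := hk ((w + t) / 2 ^ r) ⟨div_nonneg (by linarith [ht.1]) hp.le, by
    rw [div_le_one hp]; linarith [ht.2]⟩
  have e : ∀ (a : ℤ) (m : ℕ), (((a * 2 ^ r + w : ℤ) : ℝ) + t) / 2 ^ (m + r)
      = (a + (w + t) / 2 ^ r) / 2 ^ m := by
    intro a m; push_cast; rw [pow_add]; field_simp; ring
  rw [e, e, this]

/-- The similarity class of a standard interval of `[0, 1]` of level at least `L` only depends on
the last `n` binary digits of its address. -/
def Memory (h : ℝ → ℝ) (L n : ℕ) : Prop :=
  ∀ (m l : ℕ) (a b : ℤ), L ≤ m → L ≤ l → 0 ≤ a → a < 2 ^ m → 0 ≤ b → b < 2 ^ l →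
    a ≡ b [ZMOD 2 ^ n] → Sim h a m b l

/-- An element of `F₂` mapping `[0, 1]` affinely onto its left half. -/
theorem f0_pl : ∃ f : Equiv.Perm ℝ, MemF 2 f ∧ ∀ x ∈ Set.Icc (0 : ℝ) 1, f x = x / 2 := by
  have d32 : (3 / 2 : ℝ) ∈ zpows 2 := dy_iff.2 ⟨3, 1, by norm_num⟩
  have h1 : PL (fun x => 2 ^ (1 : ℤ) * x + -(3 / 2)) := pl_affine 1 (dy_neg d32)
  have h2 : PL (fun x => 2 ^ (-1 : ℤ) * x + (0 : ℤ)) := pl_affine (-1) (dy_int 0)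
  have e3 : (2 : ℝ) ^ (1 : ℤ) * (3 / 2) + -(3 / 2) = 3 / 2 := by norm_num
  have h3 := h1.glue pl_id d32 e3
  have d1 : (1 : ℝ) ∈ zpows 2 := by simpa using dy_int 1
  have d0 : (0 : ℝ) ∈ zpows 2 := by simpa using dy_int 0
  have h4 := h2.glue h3 d1 (by rw [glue_le (by norm_num)]; norm_num)
  have e5 : (0 : ℝ) = glue 1 (fun x => 2 ^ (-1 : ℤ) * x + (0 : ℤ)) (glue (3 / 2)
    (fun x => 2 ^ (1 : ℤ) * x + -(3 / 2)) fun x => x) 0 := by rw [glue_le (by norm_num)]; norm_num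
  have h5 := pl_id.glue h4 d0 e5
  refine ⟨h5.perm, memF_iff.2 ⟨h5, 0, 0, 2, fun x hx => ?_, fun x hx => ?_⟩, fun x hx => ?_⟩
  · rw [h5.perm_apply, glue_ge e5 (by linarith), glue_ge (by rw [glue_le (by norm_num)]; norm_num)
      (by linarith), glue_ge e3 (by linarith)]; simp
  · rw [h5.perm_apply, glue_le (by linarith)]; simp
  · rw [h5.perm_apply, glue_ge e5 hx.1, glue_le hx.2]
    rw [zpow_neg, zpow_one]; push_cast; ring

/-- An element of `F₂` mapping `[0, 1]` affinely onto its right half. -/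
theorem f1_pl : ∃ f : Equiv.Perm ℝ, MemF 2 f ∧ ∀ x ∈ Set.Icc (0 : ℝ) 1, f x = (x + 1) / 2 := by
  have d12 : (1 / 2 : ℝ) ∈ zpows 2 := dy_iff.2 ⟨1, 1, by norm_num⟩
  have d1 : (1 : ℝ) ∈ zpows 2 := by simpa using dy_int 1
  have d0 : (0 : ℝ) ∈ zpows 2 := by simpa using dy_int 0
  have h1 : PL (fun x => 2 ^ (1 : ℤ) * x + 1 / 2) := pl_affine 1 d12
  have h2 : PL (fun x => 2 ^ (-1 : ℤ) * x + 1 / 2) := pl_affine (-1) d12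
  have e3 : (2 : ℝ) ^ (-1 : ℤ) * 1 + 1 / 2 = 1 := by norm_num
  have h3 := h2.glue pl_id d1 e3
  have e4 : (2 : ℝ) ^ (1 : ℤ) * 0 + 1 / 2 = glue 1 (fun x => 2 ^ (-1 : ℤ) * x + 1 / 2)
    (fun x => x) 0 := by rw [glue_le (by norm_num)]; norm_num
  have h4 := h1.glue h3 d0 e4
  have e5 : (-(1 / 2) : ℝ) = glue 0 (fun x => 2 ^ (1 : ℤ) * x + 1 / 2) (glue 1
    (fun x => 2 ^ (-1 : ℤ) * x + 1 / 2) (fun x => x)) (-(1 / 2)) := by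
    rw [glue_le (by norm_num)]; norm_num
  have h5 := pl_id.glue h4 (dy_neg d12) e5
  refine ⟨h5.perm, memF_iff.2 ⟨h5, 0, 0, 2, fun x hx => ?_, fun x hx => ?_⟩, fun x hx => ?_⟩
  · rw [h5.perm_apply, glue_ge e5 (by linarith), glue_ge e4 (by linarith), glue_ge e3
      (by linarith)]; simp
  · rw [h5.perm_apply, glue_le (by linarith)]; simp
  · rw [h5.perm_apply, glue_ge e5 (by linarith [hx.1]), glue_ge e4 hx.1, glue_le hx.2]
    rw [zpow_neg, zpow_one]; ring

/-- Elements of `F₂` translating by a small dyadic `δ` on a prescribed interval. -/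
theorem tau_pl (u v : ℝ) {δ : ℝ} (hδ : δ ∈ zpows 2) (h0 : 0 < δ) :
    ∃ f : Equiv.Perm ℝ, MemF 2 f ∧ ∀ x ∈ Set.Icc u v, f x = x + δ := by
  obtain ⟨A, hA, -, hA'⟩ := exists_dy_btwn (show u - δ - 1 < u - δ by linarith)
  obtain ⟨B, hB, hB', -⟩ := exists_dy_btwn (show max A v + 2 * δ < max A v + 2 * δ + 1 by linarith)
  have hAB := le_max_left A v
  have hvB := le_max_right A v
  have h1 : PL (fun x => 2 ^ (1 : ℤ) * x + -A) := pl_affine 1 (dy_neg hA)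
  have h2 : PL (fun x => x + δ) := pl_translate hδ
  have h3 : PL (fun x => 2 ^ (-1 : ℤ) * x + 2 ^ (-1 : ℤ) * (B + δ)) :=
    pl_affine (-1) (dy_mul (dy_zpow _) (dy_add hB hδ))
  have e3 : (2 : ℝ) ^ (-1 : ℤ) * (B + δ) + 2 ^ (-1 : ℤ) * (B + δ) = B + δ := by
    rw [zpow_neg, zpow_one]; ring
  have h4 := h3.glue pl_id (dy_add hB hδ) e3
  have e4 : (B - δ) + δ = glue (B + δ) (fun x => 2 ^ (-1 : ℤ) * x + 2 ^ (-1 : ℤ) * (B + δ))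
      (fun x => x) (B - δ) := by
    rw [glue_le (by linarith), zpow_neg, zpow_one]; ring
  have h5 := h2.glue h4 (dy_sub hB hδ) e4
  have e5 : (2 : ℝ) ^ (1 : ℤ) * (A + δ) + -A = glue (B - δ) (fun x => x + δ) (glue (B + δ)
      (fun x => 2 ^ (-1 : ℤ) * x + 2 ^ (-1 : ℤ) * (B + δ)) (fun x => x)) (A + δ) := by
    rw [glue_le (by linarith), zpow_one]; ring
  have h6 := h1.glue h5 (dy_add hA hδ) e5
  have e6 : A = glue (A + δ) (fun x => 2 ^ (1 : ℤ) * x + -A) (glue (B - δ) (fun x => x + δ)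
      (glue (B + δ) (fun x => 2 ^ (-1 : ℤ) * x + 2 ^ (-1 : ℤ) * (B + δ)) (fun x => x))) A := by
    rw [glue_le (by linarith), zpow_one]; ring
  have h7 := pl_id.glue h6 hA e6
  refine ⟨h7.perm, memF_iff.2 ⟨h7, 0, 0, max (B + δ) (-A), fun x hx => ?_, fun x hx => ?_⟩,
    fun x hx => ?_⟩
  · have := le_max_left (B + δ) (-A)
    rw [h7.perm_apply, glue_ge e6 (by linarith), glue_ge e5 (by linarith), glue_ge e4
      (by linarith), glue_ge e3 (by linarith)]; simp
  · have := le_max_right (B + δ) (-A)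
    rw [h7.perm_apply, glue_le (by linarith)]; simp
  · rw [h7.perm_apply, glue_ge e6 (by linarith [hx.1]), glue_ge e5 (by linarith [hx.1]), glue_le
      (by linarith [hx.2])]

/-- Prepending a digit to a long address does not change the similarity class. -/
theorem IsN.prepend {h : Equiv.Perm ℝ} (hh : IsN h) : ∃ L : ℕ, ∀ (m : ℕ) (a : ℤ), L ≤ m → 0 ≤ a →
    a < 2 ^ m → Sim h a m a (m + 1) ∧ Sim h a m (a + 2 ^ m) (m + 1) := by
  have key : ∀ (f : Equiv.Perm ℝ), MemF 2 f → ∀ᶠ m : ℕ in atTop, ∀ a : ℤ, 0 ≤ a → a < 2 ^ m →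
      ∃ (k : ℤ) (c : ℝ), ∀ t ∈ Set.Icc (0 : ℝ) 1,
        h (f ((a + t) / 2 ^ m)) = 2 ^ k * h ((a + t) / 2 ^ m) + c := by
    intro f hf
    filter_upwards [grid (memF_iff.1 ((hh.2 f).1 hf)).1 hh.1 fun d hd => hh.inv.dy hd]
      with m hm a h0 h1
    obtain ⟨k, c, hk⟩ := hm a h0 h1
    refine ⟨k, c, fun t ht => ?_⟩
    have := hk ((a + t) / 2 ^ m) ⟨by gcongr; linarith [ht.1], by gcongr; exact ht.2⟩
    simpa using this
  obtain ⟨f0, hf0, e0⟩ := f0_pl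
  obtain ⟨f1, hf1, e1⟩ := f1_pl
  obtain ⟨L, hL⟩ := eventually_atTop.1 ((key f0 hf0).and (key f1 hf1))
  refine ⟨L, fun m a hm h0 h1 => ?_⟩
  have hp : (0 : ℝ) < 2 ^ m := by positivity
  have hI : ∀ t ∈ Set.Icc (0 : ℝ) 1, (a + t) / 2 ^ m ∈ Set.Icc (0 : ℝ) 1 := by
    intro t ht
    have h0' : (0 : ℝ) ≤ a := by exact_mod_cast h0
    have h1' : (a : ℝ) + 1 ≤ 2 ^ m := by exact_mod_cast h1
    exact ⟨div_nonneg (by linarith [ht.1]) hp.le, by rw [div_le_one hp]; linarith [ht.2]⟩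
  constructor
  · obtain ⟨k, c, hk⟩ := (hL m hm).1 a h0 h1
    refine ⟨k, c, fun t ht => ?_⟩
    rw [← hk t ht, e0 _ (hI t ht), pow_succ, div_div]
  · obtain ⟨k, c, hk⟩ := (hL m hm).2 a h0 h1
    refine ⟨k, c, fun t ht => ?_⟩
    rw [← hk t ht, e1 _ (hI t ht)]
    congr 1
    push_cast; rw [pow_succ]; field_simp; ring

/-- Long addresses are built from their last `L` digits by prepending digits, so that only those
`L` digits matter for the similarity class. -/
theorem IsN.memory {h : Equiv.Perm ℝ} (hh : IsN h) : ∃ L : ℕ, Memory h L L := by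
  obtain ⟨L, hL⟩ := hh.prepend
  have key : ∀ (r : ℕ) (a : ℤ), 0 ≤ a → a < 2 ^ (L + r) → Sim h (a % 2 ^ L) L a (L + r) := by
    intro r
    induction r with
    | zero =>
      intro a h0 h1
      rw [Int.emod_eq_of_lt h0 (by simpa using h1)]
      exact Sim.refl _ _ _
    | succ r ih =>
      intro a h0 h1
      rcases lt_or_ge a (2 ^ (L + r)) with h2 | h2
      · exact (ih a h0 h2).trans (hL (L + r) a (by omega) h0 h2).1
      · have h3 : a - 2 ^ (L + r) < 2 ^ (L + r) := by
          rw [← add_assoc, pow_succ] at h1; linarith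
        have h4 := (hL (L + r) (a - 2 ^ (L + r)) (by omega) (by linarith) h3).2
        rw [sub_add_cancel] at h4
        have h5 := ih _ (by linarith) h3
        rw [show (a - 2 ^ (L + r)) % 2 ^ L = a % 2 ^ L by
          rw [pow_add, Int.sub_mul_emod_self_left]] at h5
        exact h5.trans h4
  refine ⟨L, fun m l a b hm hl ha0 ha1 hb0 hb1 hab => ?_⟩
  obtain ⟨r, rfl⟩ := Nat.exists_eq_add_of_le hm
  obtain ⟨s, rfl⟩ := Nat.exists_eq_add_of_le hl
  have h1 := key r a ha0 ha1
  have h2 := key s b hb0 hb1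
  rw [show a % 2 ^ L = b % 2 ^ L from hab] at h1
  exact h1.symm.trans h2

/-- If the memory length `n + 1` cannot be shortened, similar intervals have the same last digit. -/
theorem digit {h : ℝ → ℝ} {L n : ℕ} (hM : Memory h L (n + 1)) (hn : ¬ Memory h L n) {m l : ℕ}
    {a b : ℤ} (hm : L ≤ m) (hl : L ≤ l) (ha0 : 0 ≤ a) (ha1 : a < 2 ^ m) (hb0 : 0 ≤ b)
    (hb1 : b < 2 ^ l) (hs : Sim h a m b l) : a % 2 = b % 2 := by
  by_contra hab
  apply hn
  -- Two addresses with the same last `n` digits `w` can only differ in the digit before `w`.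
  -- Appending `w` to the similar addresses `a` and `b`, whose last digits differ, gives similar
  -- addresses realising both values of that digit.
  intro m1 l1 a1 b1 hm1 hl1 ha10 ha11 hb10 hb11 hmod
  have hp : (0 : ℤ) < 2 ^ n := by positivity
  set w := a1 % 2 ^ n with hw
  have hw0 : 0 ≤ w := Int.emod_nonneg _ hp.ne'
  have hw1 : w < 2 ^ n := Int.emod_lt_of_pos _ hp
  have ea : a1 = 2 ^ n * (a1 / 2 ^ n) + w := (Int.mul_ediv_add_emod _ _).symm
  have eb : b1 = 2 ^ n * (b1 / 2 ^ n) + w := by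
    rw [hw, show a1 % 2 ^ n = b1 % 2 ^ n from hmod]; exact (Int.mul_ediv_add_emod _ _).symm
  set q1 := a1 / 2 ^ n
  set q2 := b1 / 2 ^ n
  have cong : ∀ p q : ℤ, p % 2 = q % 2 → 2 ^ n * p + w ≡ q * 2 ^ n + w [ZMOD 2 ^ (n + 1)] := by
    intro p q hpq
    refine Int.ModEq.add_right _ ?_
    have h3 : p ≡ q [ZMOD 2] := hpq
    have := h3.mul_left' (c := 2 ^ n)
    rwa [← pow_succ, mul_comm (2 ^ n : ℤ) q] at this
  have hd := hs.descend n hw0 hw1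
  have bd : ∀ (a : ℤ) (m : ℕ), 0 ≤ a → a < 2 ^ m → 0 ≤ a * 2 ^ n + w ∧
      a * 2 ^ n + w < 2 ^ (m + n) := by
    intro a m h0 h1
    refine ⟨by positivity, ?_⟩
    rw [pow_add]; nlinarith
  obtain ⟨ba0, ba1⟩ := bd a m ha0 ha1
  obtain ⟨bb0, bb1⟩ := bd b l hb0 hb1
  by_cases hq : q1 % 2 = q2 % 2
  · refine hM m1 l1 a1 b1 hm1 hl1 ha10 ha11 hb10 hb11 ?_
    rw [ea, eb, mul_comm _ q2]; exact cong _ _ hq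
  by_cases hqa : q1 % 2 = a % 2
  · have s1 := hM m1 (m + n) a1 _ hm1 (by omega) ha10 ha11 ba0 ba1 (by rw [ea]; exact cong _ _ hqa)
    have s2 := hM l1 (l + n) b1 _ hl1 (by omega) hb10 hb11 bb0 bb1
      (by rw [eb]; exact cong _ _ (by omega))
    exact (s1.trans hd).trans s2.symm
  · have s1 := hM m1 (l + n) a1 _ hm1 (by omega) ha10 ha11 bb0 bb1
      (by rw [ea]; exact cong _ _ (by omega))
    have s2 := hM l1 (m + n) b1 _ hl1 (by omega) hb10 hb11 ba0 ba1
      (by rw [eb]; exact cong _ _ (by omega))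
    exact (s1.trans hd.symm).trans s2.symm

/-! ### Rigidity: the similarity relation is trivial -/

/-- `P` maps the standard interval `[a/2ᵐ, (a+1)/2ᵐ]` affinely onto a standard interval. -/
def StdMap (P : ℝ → ℝ) (a : ℤ) (m : ℕ) : Prop :=
  ∃ (b : ℤ) (l : ℕ), ∀ t ∈ Set.Icc (0 : ℝ) 1, P ((a + t) / 2 ^ m) = (b + t) / 2 ^ l

/-- A piecewise linear homeomorphism maps all sufficiently short standard subintervals of `[0, 1]`
affinely onto standard intervals. -/
theorem PL.stdMap {P : ℝ → ℝ} (hP : PL P) : ∀ᶠ m : ℕ in atTop, ∀ a : ℤ, 0 ≤ a → a < 2 ^ m →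
    StdMap P a m := by
  obtain ⟨M, hM⟩ := (grid hP (h := 1) strictMono_id (fun d hd => by simpa using hd)).exists
  have key : ∀ a ∈ Set.Ico (0 : ℤ) (2 ^ M), ∀ᶠ r : ℕ in atTop, ∀ w : ℤ, 0 ≤ w → w < 2 ^ r →
      StdMap P (a * 2 ^ r + w) (M + r) := by
    intro a ha
    obtain ⟨k, c, hk⟩ := hM a ha.1 ha.2
    have ha' : (a : ℝ) / 2 ^ M ∈ zpows 2 := dy_div _ _
    have hPa : P (a / 2 ^ M) ∈ zpows 2 := hP.dy _ ha'
    have hk0 : P (a / 2 ^ M) = 2 ^ k * (a / 2 ^ M) + c := by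
      simpa using hk (a / 2 ^ M) ⟨le_rfl, by gcongr; linarith⟩
    have hd : 2 ^ (M - k : ℤ) * P (a / 2 ^ M) ∈ zpows 2 := dy_mul (dy_zpow _) hPa
    filter_upwards [dy_eventually hd, eventually_ge_atTop (k.toNat)] with r ⟨q, hq⟩ hr w hw0 hw1
    obtain ⟨l, hl⟩ := Int.eq_ofNat_of_zero_le (show 0 ≤ (M : ℤ) + r - k by omega)
    have hl' : (2 : ℝ) ^ l = 2 ^ M * 2 ^ r * 2 ^ (-k) := by
      rw [← zpow_natCast, show (l : ℤ) = M + r + -k by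
        rw [← sub_eq_add_neg]; exact hl.symm, zpow_add₀ two_ne_zero,
        zpow_add₀ two_ne_zero, zpow_natCast, zpow_natCast]
    have hp : (0 : ℝ) < 2 ^ r := by positivity
    have hw0' : (0 : ℝ) ≤ w := by exact_mod_cast hw0
    have hw1' : (w : ℝ) + 1 ≤ 2 ^ r := by exact_mod_cast hw1
    refine ⟨q + w, l, fun t ht => ?_⟩
    have e : (((a * 2 ^ r + w : ℤ) : ℝ) + t) / 2 ^ (M + r) = (a + (w + t) / 2 ^ r) / 2 ^ M := by
      push_cast; rw [pow_add]; field_simp; ring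
    have hu1 : (w + t) / 2 ^ r ≤ 1 := by rw [div_le_one hp]; linarith [ht.2]
    have hu0 : 0 ≤ (w + t) / 2 ^ r := div_nonneg (by linarith [ht.1]) hp.le
    have hu := hk ((a + (w + t) / 2 ^ r) / 2 ^ M) ⟨by gcongr; linarith, by gcongr⟩
    simp only [Equiv.Perm.coe_one, id_eq] at hu
    rw [e, hu]
    have h2 : (2 : ℝ) ^ (-k) * 2 ^ k = 1 := by rw [← zpow_add₀ two_ne_zero]; simp
    have hq' : (q : ℝ) = 2 ^ M * 2 ^ (-k) * P (a / 2 ^ M) * 2 ^ r := by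
      rw [sub_eq_add_neg, zpow_add₀ two_ne_zero, zpow_natCast] at hq
      rw [hq]; field_simp
    have hk' : (0 : ℝ) < 2 ^ (-k) := by positivity
    push_cast
    rw [eq_div_iff (by positivity), hl', hq', hk0]
    have e1 : (a + (w + t) / 2 ^ r) / 2 ^ M * (2 ^ M * 2 ^ r) = a * 2 ^ r + (w + t) := by
      field_simp
    have e2 : (a : ℝ) / 2 ^ M * 2 ^ M = a := by field_simp
    linear_combination 2 ^ k * 2 ^ (-k) * e1 + (w + t) * h2 - 2 ^ (-k) * 2 ^ r * 2 ^ k * e2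
  have h1 := (eventually_all_finite (Set.finite_Ico (0 : ℤ) (2 ^ M))).2 key
  obtain ⟨R, hR⟩ := eventually_atTop.1 h1
  refine eventually_atTop.2 ⟨M + R, fun m hm a h0 h1 => ?_⟩
  obtain ⟨r, rfl⟩ := Nat.exists_eq_add_of_le (show M ≤ m by omega)
  have hp : (0 : ℤ) < 2 ^ r := by positivity
  have := hR r (by omega) (a / 2 ^ r) ⟨Int.ediv_nonneg h0 hp.le, by
    rw [Int.ediv_lt_iff_lt_mul hp, ← pow_add]; exact h1⟩ (a % 2 ^ r) (Int.emod_nonneg _ hp.ne')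
    (Int.emod_lt_of_pos _ hp)
  rwa [Int.ediv_mul_add_emod] at this

/-- If the two halves of a standard interval are mapped to standard intervals whose addresses end
in `0` and `1` respectively, then so is the whole interval. -/
theorem merge {P : ℝ → ℝ} {a : ℤ} {m : ℕ} {b b' : ℤ} {l l' : ℕ} (hl : 1 ≤ l)
    (h0 : ∀ t ∈ Set.Icc (0 : ℝ) 1, P (((2 * a : ℤ) + t) / 2 ^ (m + 1)) = (b + t) / 2 ^ l)
    (h1 : ∀ t ∈ Set.Icc (0 : ℝ) 1, P (((2 * a + 1 : ℤ) + t) / 2 ^ (m + 1)) = (b' + t) / 2 ^ l')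
    (hb : b % 2 = 0) (hb' : b' % 2 = 1) : StdMap P a m := by
  have hadj : ((b : ℝ) + 1) / 2 ^ l = b' / 2 ^ l' := by
    have e0 := h0 1 ⟨zero_le_one, le_rfl⟩
    have e1 := h1 0 ⟨le_rfl, zero_le_one⟩
    push_cast at e0 e1
    rw [add_zero, add_zero] at e1
    rw [← e0, ← e1]
  have hadj' : (b + 1) * 2 ^ l' = b' * 2 ^ l := by
    rw [div_eq_div_iff (by positivity) (by positivity)] at hadj
    exact_mod_cast hadj
  have hll : l = l' := by
    rcases lt_trichotomy l l' with h | h | h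
    · obtain ⟨r, rfl⟩ := Nat.exists_eq_add_of_lt h
      exfalso
      rw [show l + r + 1 = l + (r + 1) by ring, pow_add, pow_succ] at hadj'
      have h2 : (0 : ℤ) < 2 ^ l := by positivity
      have : b' = 2 * ((b + 1) * 2 ^ r) := by
        apply mul_right_cancel₀ h2.ne'; linarith
      omega
    · exact h
    · obtain ⟨r, rfl⟩ := Nat.exists_eq_add_of_lt h
      exfalso
      rw [show l' + r + 1 = l' + (r + 1) by ring, pow_add, pow_succ] at hadj'
      have h2 : (0 : ℤ) < 2 ^ l' := by positivity
      have : b + 1 = 2 * (b' * 2 ^ r) := by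
        apply mul_right_cancel₀ h2.ne'; linarith
      omega
  subst hll
  have hbb : b' = b + 1 := by
    have h2 : (0 : ℤ) < 2 ^ l := by positivity
    exact (mul_right_cancel₀ h2.ne' hadj').symm
  obtain ⟨n, rfl⟩ := Nat.exists_eq_add_of_le' hl
  obtain ⟨q, hq⟩ : ∃ q, b = 2 * q := ⟨b / 2, by omega⟩
  refine ⟨q, n, fun t ht => ?_⟩
  rcases le_total t (1 / 2) with h | h
  · have := h0 (2 * t) ⟨by linarith [ht.1], by linarith⟩
    rw [show (((2 * a : ℤ) : ℝ) + 2 * t) / 2 ^ (m + 1) = (a + t) / 2 ^ m by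
      push_cast; rw [pow_succ]; field_simp] at this
    rw [this, hq]; push_cast; rw [pow_succ]; field_simp
  · have := h1 (2 * t - 1) ⟨by linarith [ht.1], by linarith [ht.2]⟩
    rw [show (((2 * a + 1 : ℤ) : ℝ) + (2 * t - 1)) / 2 ^ (m + 1) = (a + t) / 2 ^ m by
      push_cast; rw [pow_succ]; field_simp; ring] at this
    rw [this, hbb, hq]; push_cast; rw [pow_succ]; field_simp; ring

/-- The similarity class of long standard intervals cannot determine the last digit of the address.
Otherwise consider `P = h⁻¹τh ∈ F₂` with `τ` a translation by a tiny amount near `h [0, 1]`. Then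
`P` preserves similarity classes, hence last digits, so that standard pieces of `P` can be merged
until `P` is an affine map between standard intervals on a fixed interval. Being close to the
identity, it is the identity there, which is absurd. -/
theorem no_digit {h : Equiv.Perm ℝ} (hh : IsN h) (L : ℕ)
    (hdig : ∀ (m l : ℕ) (a b : ℤ), L ≤ m → L ≤ l → 0 ≤ a → a < 2 ^ m → 0 ≤ b → b < 2 ^ l →
      Sim h a m b l → a % 2 = b % 2) : False := by
  have hcont := mono_cont hh.1 h.surjective
  have hcont' := cont_inv hh.1
  -- the fixed interval is `[1/2, 1/2 + 2^(-m0)]`, with address `a0` at level `m0`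
  set m0 := L + 2 with hm0
  set a0 : ℤ := 2 ^ (L + 1) with ha0
  set w0 : ℝ := 1 / 2 ^ m0 with hw0
  have hp0 : (0 : ℝ) < 2 ^ m0 := by positivity
  have hw0p : 0 < w0 := by positivity
  have hw0L : w0 * 4 = 1 / 2 ^ L := by rw [hw0, hm0, pow_add]; field_simp; norm_num
  have hw0q : w0 ≤ 1 / 4 := by
    have : (1 : ℝ) / 2 ^ L ≤ 1 := by
      rw [div_le_one (by positivity)]; exact one_le_pow₀ one_le_two
    linarith
  have ha0' : (a0 : ℝ) / 2 ^ m0 = 1 / 2 := by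
    rw [ha0, hm0, show L + 2 = (L + 1) + 1 by ring, pow_succ (2 : ℝ) (L + 1)]; push_cast
    field_simp
  -- choice of the translation length
  obtain ⟨ρ, hρ, hunif⟩ := Metric.uniformContinuousOn_iff.1
    ((isCompact_Icc (a := h 0) (b := h 1 + 1)).uniformContinuousOn_of_continuous
      hcont'.continuousOn) (w0 / 4) (by positivity)
  obtain ⟨δ, hδ, hδ0, hδ1⟩ := exists_dy_btwn (lt_min hρ one_pos)
  obtain ⟨τ, hτ, hτe⟩ := tau_pl (h 0) (h 1) hδ hδ0
  set P : Equiv.Perm ℝ := h⁻¹ * τ * h with hPdef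
  have hPF : MemF 2 P := by
    rw [hh.2 P]; simpa [hPdef, mul_assoc] using hτ
  have hPPL := (memF_iff.1 hPF).1
  have hP : ∀ x ∈ Set.Icc (0 : ℝ) 1, h (P x) = h x + δ := by
    intro x hx
    have : h (P x) = τ (h x) := by simp [hPdef]
    rw [this, hτe _ ⟨hh.1.monotone hx.1, hh.1.monotone hx.2⟩]
  have hPgt : ∀ x ∈ Set.Icc (0 : ℝ) 1, x < P x := by
    intro x hx
    rw [← hh.1.lt_iff_lt, hP x hx]; linarith
  have hPlt : ∀ x ∈ Set.Icc (0 : ℝ) 1, P x < x + w0 / 4 := by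
    intro x hx
    have h1 : h 0 ≤ h x := hh.1.monotone hx.1
    have h2 : h x ≤ h 1 := hh.1.monotone hx.2
    have := hunif (h x + δ) ⟨by linarith, by linarith [min_le_right ρ 1]⟩ (h x)
      ⟨h1, by linarith⟩ (by
        rw [Real.dist_eq, add_sub_cancel_left, abs_of_pos hδ0]; linarith [min_le_left ρ 1])
    rw [← hP x hx, Real.dist_eq] at this
    have := (abs_lt.1 this).2
    simp only [Equiv.Perm.inv_def, Equiv.symm_apply_apply] at this
    linarith
  -- subintervals of the fixed interval
  have hsub : ∀ (r : ℕ) (w : ℤ), 0 ≤ w → w < 2 ^ r → ∀ t ∈ Set.Icc (0 : ℝ) 1,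
      (((a0 * 2 ^ r + w : ℤ) : ℝ) + t) / 2 ^ (m0 + r) ∈ Set.Icc (1 / 2 : ℝ) (3 / 4) := by
    intro r w h0 h1 t ht
    have hp : (0 : ℝ) < 2 ^ r := by positivity
    have h0' : (0 : ℝ) ≤ w := by exact_mod_cast h0
    have h1' : (w : ℝ) + 1 ≤ 2 ^ r := by exact_mod_cast h1
    have e : (((a0 * 2 ^ r + w : ℤ) : ℝ) + t) / 2 ^ (m0 + r)
        = (a0 : ℝ) / 2 ^ m0 + (w + t) / 2 ^ r * w0 := by
      push_cast; rw [hw0, pow_add]; field_simp; ring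
    have hu1 : (w + t) / 2 ^ r ≤ 1 := by rw [div_le_one hp]; linarith [ht.2]
    have hu0 : 0 ≤ (w + t) / 2 ^ r := div_nonneg (by linarith [ht.1]) hp.le
    rw [e, ha0']
    constructor
    · have := mul_nonneg hu0 hw0p.le; linarith
    · have := mul_le_mul_of_nonneg_right hu1 hw0p.le; linarith
  have hbd : ∀ (r : ℕ) (w : ℤ), 0 ≤ w → w < 2 ^ r →
      0 ≤ a0 * 2 ^ r + w ∧ a0 * 2 ^ r + w < 2 ^ (m0 + r) := by
    intro r w h0 h1
    have ha0p : (0 : ℤ) ≤ a0 := by positivity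
    have : a0 * 2 = 2 ^ m0 := by rw [ha0, ← pow_succ]
    refine ⟨by positivity, ?_⟩
    have h2 : (1 : ℤ) ≤ a0 := by rw [ha0]; exact one_le_pow₀ one_le_two
    have h3 : (0 : ℤ) < 2 ^ r := by positivity
    rw [pow_add, ← this]; nlinarith
  -- an image of a standard piece is a long standard interval of `[0, 1]` with the same last digit
  have piece : ∀ (r : ℕ) (w : ℤ), 0 ≤ w → w < 2 ^ r → 1 ≤ r → ∀ (b : ℤ) (l : ℕ),
      (∀ t ∈ Set.Icc (0 : ℝ) 1,
        P (((a0 * 2 ^ r + w : ℤ) + t) / 2 ^ (m0 + r)) = (b + t) / 2 ^ l) →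
      L < l ∧ (a0 * 2 ^ r + w) % 2 = b % 2 := by
    intro r w h0 h1 hr b l hb
    have i01 : ∀ t ∈ Set.Icc (0 : ℝ) 1,
        (((a0 * 2 ^ r + w : ℤ) : ℝ) + t) / 2 ^ (m0 + r) ∈ Set.Icc (0 : ℝ) 1 := fun t ht =>
      ⟨by linarith [(hsub r w h0 h1 t ht).1], by linarith [(hsub r w h0 h1 t ht).2]⟩
    have t0 : (0 : ℝ) ∈ Set.Icc (0 : ℝ) 1 := ⟨le_rfl, zero_le_one⟩
    have t1 : (1 : ℝ) ∈ Set.Icc (0 : ℝ) 1 := ⟨zero_le_one, le_rfl⟩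
    have hlp : (0 : ℝ) < 2 ^ l := by positivity
    have g0 := hPgt _ (i01 0 t0)
    have g1 := hPlt _ (i01 1 t1)
    rw [hb 0 t0] at g0
    rw [hb 1 t1] at g1
    have hb0 : 0 ≤ b := by
      have : (0 : ℝ) < (b + 0) / 2 ^ l := by linarith [(i01 0 t0).1]
      rw [add_zero, div_pos_iff_of_pos_right hlp] at this
      exact_mod_cast this.le
    have hb1 : b < 2 ^ l := by
      have : ((b : ℝ) + 1) / 2 ^ l ≤ 1 := by linarith [(hsub r w h0 h1 1 t1).2]
      rw [div_le_one hlp] at this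
      exact_mod_cast this
    have hlen : (1 : ℝ) / 2 ^ l < 1 / 2 ^ L := by
      have e1 : ((b : ℝ) + 1) / 2 ^ l - (b + 0) / 2 ^ l = 1 / 2 ^ l := by ring
      have e2 : (((a0 * 2 ^ r + w : ℤ) : ℝ) + 1) / 2 ^ (m0 + r)
          - (((a0 * 2 ^ r + w : ℤ) : ℝ) + 0) / 2 ^ (m0 + r) = w0 * (1 / 2 ^ r) := by
        rw [hw0, pow_add]; field_simp; ring
      have e3 : (1 : ℝ) / 2 ^ r ≤ 1 := by
        rw [div_le_one (by positivity)]; exact one_le_pow₀ one_le_two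
      have e4 := mul_le_mul_of_nonneg_left e3 hw0p.le
      linarith
    have hL : L < l := by
      rw [one_div_lt_one_div (by positivity) (by positivity)] at hlen
      exact (pow_lt_pow_iff_right₀ one_lt_two).1 hlen
    refine ⟨hL, ?_⟩
    obtain ⟨c0, c1⟩ := hbd r w h0 h1
    refine hdig (m0 + r) l _ b (by omega) hL.le c0 c1 hb0 hb1 ⟨0, δ, fun t ht => ?_⟩
    rw [← hb t ht, hP _ (i01 t ht)]; simp
  -- downward induction on the level
  have desc : ∀ r : ℕ, (∀ w : ℤ, 0 ≤ w → w < 2 ^ r → StdMap P (a0 * 2 ^ r + w) (m0 + r)) →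
      StdMap P a0 m0 := by
    intro r
    induction r with
    | zero => intro H; simpa using H 0 le_rfl (by norm_num)
    | succ r ih =>
      intro H
      refine ih fun w h0 h1 => ?_
      have p0 : 2 * w < 2 ^ (r + 1) := by rw [pow_succ]; linarith
      have p1 : 2 * w + 1 < 2 ^ (r + 1) := by rw [pow_succ]; linarith
      obtain ⟨b, l, hb⟩ := H (2 * w) (by linarith) p0
      obtain ⟨b', l', hb'⟩ := H (2 * w + 1) (by linarith) p1
      obtain ⟨hl, hd⟩ := piece (r + 1) (2 * w) (by linarith) p0 (by omega) b l hb
      obtain ⟨-, hd'⟩ := piece (r + 1) (2 * w + 1) (by linarith) p1 (by omega) b' l' hb'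
      have q0 : a0 * 2 ^ (r + 1) + 2 * w = 2 * (a0 * 2 ^ r + w) := by ring
      have q1 : a0 * 2 ^ (r + 1) + (2 * w + 1) = 2 * (a0 * 2 ^ r + w) + 1 := by ring
      rw [q0] at hb hd
      rw [q1] at hb' hd'
      exact merge (m := m0 + r) (by omega) hb hb' (by omega) (by omega)
  obtain ⟨M, hM⟩ := eventually_atTop.1 hPPL.stdMap
  obtain ⟨b, l, hb⟩ := desc M fun w h0 h1 =>
    hM (m0 + M) (by omega) _ (hbd M w h0 h1).1 (hbd M w h0 h1).2
  have t0 : (0 : ℝ) ∈ Set.Icc (0 : ℝ) 1 := ⟨le_rfl, zero_le_one⟩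
  have t1 : (1 : ℝ) ∈ Set.Icc (0 : ℝ) 1 := ⟨zero_le_one, le_rfl⟩
  have b0 := hb 0 t0
  have b1 := hb 1 t1
  rw [add_zero, add_zero, ha0'] at b0
  rw [add_div, ha0', ← hw0] at b1
  have m1 : (1 / 2 : ℝ) ∈ Set.Icc (0 : ℝ) 1 := by constructor <;> norm_num
  have m2 : (1 / 2 + w0 : ℝ) ∈ Set.Icc (0 : ℝ) 1 := by constructor <;> linarith
  have c1 := hPgt _ m1
  have c2 := hPlt _ m1
  have c3 := hPgt _ m2
  have c4 := hPlt _ m2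
  have hlp : (0 : ℝ) < 2 ^ l := by positivity
  have hlen : (1 : ℝ) / 2 ^ l = P (1 / 2 + w0) - P (1 / 2) := by rw [b0, b1]; ring
  have hl : l = m0 := by
    rcases lt_trichotomy l m0 with h | h | h
    · have : (2 : ℝ) ^ (l + 1) ≤ 2 ^ m0 := pow_le_pow_right₀ one_le_two h
      have h2 : w0 ≤ 1 / 2 ^ (l + 1) := one_div_le_one_div_of_le (by positivity) this
      have h3 : (1 : ℝ) / 2 ^ (l + 1) * 2 = 1 / 2 ^ l := by rw [pow_succ]; field_simp
      linarith
    · exact h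
    · have : (2 : ℝ) ^ (m0 + 1) ≤ 2 ^ l := pow_le_pow_right₀ one_le_two h
      have h2 : (1 : ℝ) / 2 ^ l ≤ 1 / 2 ^ (m0 + 1) := one_div_le_one_div_of_le (by positivity) this
      have h3 : (1 : ℝ) / 2 ^ (m0 + 1) * 2 = w0 := by rw [hw0, pow_succ]; field_simp
      linarith
  rw [hl] at b0
  rw [b0, ← ha0', div_lt_div_iff_of_pos_right hp0] at c1
  have c1' : a0 + 1 ≤ b := by exact_mod_cast c1
  have c5 : ((a0 : ℝ) + 1) / 2 ^ m0 ≤ b / 2 ^ m0 := by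
    gcongr; exact_mod_cast c1'
  rw [add_div, ha0', ← hw0, ← b0] at c5
  linarith

/-! ### Elements of the normalizer are piecewise linear -/

theorem two_zpow_add_eq_one {i j : ℤ} (h : (2 : ℝ) ^ i + 2 ^ j = 1) :
    (2 : ℝ) ^ i = 1 / 2 ∧ (2 : ℝ) ^ j = 1 / 2 := by
  have key : ∀ i : ℤ, (2 : ℝ) ^ i < 1 → (2 : ℝ) ^ i ≤ 1 / 2 := by
    intro i hi
    have h1 : i < 0 := by
      rw [← zpow_zero (2 : ℝ)] at hi
      exact (zpow_lt_zpow_iff_right₀ one_lt_two).1 hi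
    have : (2 : ℝ) ^ i ≤ 2 ^ (-1 : ℤ) := zpow_le_zpow_right₀ one_le_two (by omega)
    rwa [zpow_neg, zpow_one, ← one_div] at this
  have hi : (0 : ℝ) < 2 ^ i := by positivity
  have hj : (0 : ℝ) < 2 ^ j := by positivity
  have := key i (by linarith)
  have := key j (by linarith)
  constructor <;> linarith

/-- A positive dyadic with dyadic inverse is a power of two. -/
theorem dy_unit {x : ℝ} (hx : 0 < x) (h : x ∈ zpows 2) (h' : x⁻¹ ∈ zpows 2) :
    ∃ k : ℤ, x = 2 ^ k := by
  obtain ⟨a, m, ha⟩ := dy_iff.1 h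
  obtain ⟨b, n, hb⟩ := dy_iff.1 h'
  have hab : (a : ℝ) * b = 2 ^ (m + n) := by
    have h1 : x * x⁻¹ = 1 := mul_inv_cancel₀ hx.ne'
    rw [ha, show (a / 2 ^ m : ℝ)⁻¹ = b / 2 ^ n by rw [← ha, hb], div_mul_div_comm,
      div_eq_one_iff_eq (by positivity), ← pow_add] at h1
    exact h1
  have hab' : a * b = 2 ^ (m + n) := by exact_mod_cast hab
  have ha0 : 0 < a := by
    have : (0 : ℝ) < a / 2 ^ m := ha ▸ hx
    rw [div_pos_iff_of_pos_right (by positivity)] at this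
    exact_mod_cast this
  have hdvd : a.natAbs ∣ 2 ^ (m + n) := by
    have := Int.natAbs_dvd_natAbs.2 (Dvd.intro b hab')
    rwa [Int.natAbs_pow] at this
  obtain ⟨r, -, hr⟩ := (Nat.dvd_prime_pow Nat.prime_two).1 hdvd
  have har : (a : ℝ) = 2 ^ r := by
    have : (a.natAbs : ℤ) = a := Int.natAbs_of_nonneg ha0.le
    rw [← this, hr]; push_cast; rfl
  refine ⟨r - m, ?_⟩
  rw [ha, har, zpow_sub₀ two_ne_zero, zpow_natCast, zpow_natCast]

/-- If all long standard intervals are similar, then `h` maps midpoints to midpoints. -/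
theorem map_midpoint {h : Equiv.Perm ℝ} (hm : StrictMono h) {L : ℕ} (hM : Memory h L 0) {m : ℕ} {a : ℤ}
    (hL : L ≤ m) (h0 : 0 ≤ a) (h1 : a < 2 ^ m) :
    h ((2 * a + 1) / 2 ^ (m + 1)) = (h (a / 2 ^ m) + h ((a + 1) / 2 ^ m)) / 2 := by
  have p0 : 2 * a < 2 ^ (m + 1) := by rw [pow_succ]; linarith
  have p1 : 2 * a + 1 < 2 ^ (m + 1) := by rw [pow_succ]; linarith
  obtain ⟨i, c, hi⟩ := hM m (m + 1) a (2 * a) hL (by omega) h0 h1 (by linarith) p0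
    (by simpa using Int.modEq_one)
  obtain ⟨j, d, hj⟩ := hM m (m + 1) a (2 * a + 1) hL (by omega) h0 h1 (by linarith) p1
    (by simpa using Int.modEq_one)
  have t0 : (0 : ℝ) ∈ Set.Icc (0 : ℝ) 1 := ⟨le_rfl, zero_le_one⟩
  have t1 : (1 : ℝ) ∈ Set.Icc (0 : ℝ) 1 := ⟨zero_le_one, le_rfl⟩
  have i0 := hi 0 t0
  have i1 := hi 1 t1
  have j0 := hj 0 t0
  have j1 := hj 1 t1
  push_cast at i0 i1 j0 j1
  rw [add_zero, add_zero, show (2 * (a : ℝ)) / 2 ^ (m + 1) = a / 2 ^ m by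
    rw [pow_succ]; field_simp] at i0
  rw [add_zero, add_zero] at j0
  rw [show (2 * (a : ℝ) + 1 + 1) / 2 ^ (m + 1) = (a + 1) / 2 ^ m by
    rw [pow_succ]; field_simp; ring] at j1
  have hlt : h (a / 2 ^ m) < h ((a + 1) / 2 ^ m) := hm (by gcongr; linarith)
  have hsum : (2 : ℝ) ^ i + 2 ^ j = 1 := by
    have : ((2 : ℝ) ^ i + 2 ^ j - 1) * (h ((a + 1) / 2 ^ m) - h (a / 2 ^ m)) = 0 := by
      linear_combination i0 - i1 + j0 - j1
    rcases mul_eq_zero.1 this with h | h <;> linarith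
  obtain ⟨e1, -⟩ := two_zpow_add_eq_one hsum
  rw [e1] at i0 i1
  linarith

/-- A map sending midpoints of standard subintervals to midpoints is affine at dyadic points. -/
theorem linear_dy {h : Equiv.Perm ℝ} (hm : StrictMono h) {L : ℕ} (hM : Memory h L 0) {a : ℤ}
    (h0 : 0 ≤ a) (h1 : a < 2 ^ L) (r : ℕ) : ∀ w : ℤ, 0 ≤ w → w ≤ 2 ^ r →
    h ((a + w / 2 ^ r) / 2 ^ L) =
      h (a / 2 ^ L) + w / 2 ^ r * (h ((a + 1) / 2 ^ L) - h (a / 2 ^ L)) := by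
  induction r with
  | zero =>
    intro w hw0 hw1
    have : w = 0 ∨ w = 1 := by simp at hw1; omega
    rcases this with rfl | rfl <;> simp
  | succ r ih =>
    intro w hw0 hw1
    rw [pow_succ] at hw1
    obtain ⟨q, rfl | rfl⟩ := Int.even_or_odd' w
    · have := ih q (by linarith) (by linarith)
      rw [show (((2 * q : ℤ) : ℝ)) / 2 ^ (r + 1) = q / 2 ^ r by
        push_cast; rw [pow_succ]; field_simp]
      exact this
    · have e0 := ih q (by omega) (by omega)
      have e1 := ih (q + 1) (by omega) (by omega)
      have hq : q < 2 ^ r := by omega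
      have hp : (0 : ℤ) < 2 ^ r := by positivity
      have := map_midpoint hm hM (m := L + r) (a := a * 2 ^ r + q) (by omega)
        (by have : 0 ≤ q := by omega
            positivity) (by rw [pow_add]; nlinarith)
      push_cast at this e1
      rw [show (2 * ((a : ℝ) * 2 ^ r + q) + 1) / 2 ^ (L + r + 1)
          = (a + (2 * q + 1) / 2 ^ (r + 1)) / 2 ^ L by rw [pow_succ, pow_succ, pow_add]; field_simp; ring,
        show ((a : ℝ) * 2 ^ r + q) / 2 ^ (L + r) = (a + q / 2 ^ r) / 2 ^ L by
          rw [pow_add]; field_simp,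
        show ((a : ℝ) * 2 ^ r + q + 1) / 2 ^ (L + r) = (a + (q + 1) / 2 ^ r) / 2 ^ L by
          rw [pow_add]; field_simp; ring, e0, e1] at this
      push_cast
      rw [this, pow_succ]
      field_simp
      ring

theorem linear_real {h : Equiv.Perm ℝ} (hm : StrictMono h) {L : ℕ} (hM : Memory h L 0) {a : ℤ}
    (h0 : 0 ≤ a) (h1 : a < 2 ^ L) {t : ℝ} (ht : t ∈ Set.Icc (0 : ℝ) 1) :
    h ((a + t) / 2 ^ L) = h (a / 2 ^ L) + t * (h ((a + 1) / 2 ^ L) - h (a / 2 ^ L)) := by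
  have hc := mono_cont hm h.surjective
  have hlim : Tendsto (fun r : ℕ => ((⌊t * 2 ^ r⌋₊ : ℝ)) / 2 ^ r) atTop (𝓝 t) :=
    (tendsto_nat_floor_mul_div_atTop ht.1).comp (tendsto_pow_atTop_atTop_of_one_lt one_lt_two)
  have hcl : Continuous (fun t : ℝ => h ((a + t) / 2 ^ L)) := hc.comp (by fun_prop)
  have hcr : Continuous (fun t : ℝ =>
    h (a / 2 ^ L) + t * (h ((a + 1) / 2 ^ L) - h (a / 2 ^ L))) := by fun_prop
  refine tendsto_nhds_unique ((hcl.tendsto t).comp hlim) (((hcr.tendsto t).comp hlim).congr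
    fun r => ?_)
  have hw : (⌊t * 2 ^ r⌋₊ : ℤ) ≤ 2 ^ r := by
    have : (⌊t * 2 ^ r⌋₊ : ℝ) ≤ 2 ^ r := (Nat.floor_le (by have := ht.1; positivity)).trans
      (mul_le_of_le_one_left (by positivity) ht.2)
    exact_mod_cast this
  have := linear_dy hm hM h0 h1 r (⌊t * 2 ^ r⌋₊ : ℤ) (by positivity) hw
  push_cast at this
  exact this.symm

/-- An element of the normalizer is affine, with slope a power of two, on all standard intervals of
`[0, 1]` of some fixed level. -/
theorem IsN.affine_unit {h : Equiv.Perm ℝ} (hh : IsN h) : ∃ L : ℕ, ∀ a : ℤ, 0 ≤ a → a < 2 ^ L →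
    ∃ (k : ℤ) (c : ℝ), ∀ x ∈ Set.Icc ((a : ℝ) / 2 ^ L) ((a + 1) / 2 ^ L), h x = 2 ^ k * x + c := by
  obtain ⟨L, hL⟩ := hh.memory
  have hM : Memory h L 0 := by
    have key : ∀ n, Memory h L n → Memory h L 0 := by
      intro n
      induction n with
      | zero => exact id
      | succ n ih =>
        intro hn
        refine ih ?_
        by_contra hn'
        exact no_digit hh L fun m l a b hm hl ha0 ha1 hb0 hb1 hs =>
          digit hn hn' hm hl ha0 ha1 hb0 hb1 hs
    exact key L hL
  refine ⟨L, fun a h0 h1 => ?_⟩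
  have hp : (0 : ℝ) < 2 ^ L := by positivity
  set u := h ((a : ℝ) / 2 ^ L) with hu
  set s := h (((a : ℝ) + 1) / 2 ^ L) - u with hs
  have hs0 : 0 < s := sub_pos.2 (hh.1 (by gcongr; linarith))
  have hlin : ∀ t ∈ Set.Icc (0 : ℝ) 1, h ((a + t) / 2 ^ L) = u + t * s :=
    fun t ht => linear_real hh.1 hM h0 h1 ht
  have hud : u ∈ zpows 2 := hh.dy (dy_div _ _)
  have hsd : s ∈ zpows 2 := by
    refine dy_sub (hh.dy ?_) hud
    exact_mod_cast dy_div (a + 1) L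
  -- `h⁻¹` preserves dyadics, hence `2⁻ⁿ / s` is dyadic when it is less than `1`
  have hsd' : s⁻¹ ∈ zpows 2 := by
    obtain ⟨n, hn⟩ := exists_pow_lt_of_lt_one hs0 (by norm_num : (1 / 2 : ℝ) < 1)
    have hq : (1 / 2 : ℝ) ^ n ∈ zpows 2 := dy_iff.2 ⟨1, n, by simp⟩
    have hq0 : (0 : ℝ) < (1 / 2) ^ n := by positivity
    have e := hlin ((1 / 2) ^ n / s) ⟨by positivity, by rw [div_le_one hs0]; exact hn.le⟩
    rw [div_mul_cancel₀ _ hs0.ne'] at e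
    have e2 : (a + (1 / 2) ^ n / s) / 2 ^ L = h⁻¹ (u + (1 / 2) ^ n) := by rw [← e]; simp
    have e3 : (a + (1 / 2) ^ n / s) / 2 ^ L ∈ zpows 2 := e2 ▸ hh.inv.dy (dy_add hud hq)
    have e4 : s⁻¹ = 2 ^ (n : ℤ) * ((a + (1 / 2) ^ n / s) / 2 ^ L * 2 ^ (L : ℤ) - a) := by
      rw [zpow_natCast, zpow_natCast, one_div, inv_pow]; field_simp; ring
    rw [e4]
    exact dy_mul (dy_zpow _) (dy_sub (dy_mul e3 (dy_zpow _)) (dy_int a))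
  obtain ⟨k, hk⟩ := dy_unit hs0 hsd hsd'
  refine ⟨k + L, u - a * s, fun x hx => ?_⟩
  rw [Set.mem_Icc, div_le_iff₀ hp, le_div_iff₀ hp] at hx
  have := hlin (x * 2 ^ L - a) ⟨by linarith, by linarith⟩
  rw [show ((a : ℝ) + (x * 2 ^ L - a)) / 2 ^ L = x by field_simp; ring] at this
  rw [this, zpow_add₀ two_ne_zero, zpow_natCast, ← hk]; ring

/-- Elements of the normalizer are piecewise linear. -/
theorem IsN.pl {h : Equiv.Perm ℝ} (hh : IsN h) : PL h := by
  have key : ∀ n : ℤ, ∃ L : ℕ, ∀ a : ℤ, 0 ≤ a → a < 2 ^ L → ∃ (k : ℤ) (c : ℝ),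
      ∀ x ∈ Set.Icc (n + (a : ℝ) / 2 ^ L) (n + (a + 1) / 2 ^ L), h x = 2 ^ k * x + c := by
    intro n
    have hT : PL (fun x : ℝ => x + n) := pl_translate (dy_int n)
    have hTN : IsN hT.perm := (MemF.good (memF_iff.2
      ⟨hT, n, n, 0, fun _ _ => rfl, fun _ _ => rfl⟩)).isN
    obtain ⟨L, hL⟩ := (hh.mul hTN).affine_unit
    refine ⟨L, fun a h0 h1 => ?_⟩
    obtain ⟨k, c, hk⟩ := hL a h0 h1
    refine ⟨k, c - 2 ^ k * n, fun x hx => ?_⟩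
    have := hk (x - n) ⟨by linarith [hx.1], by linarith [hx.2]⟩
    rw [show (h * hT.perm) (x - n) = h x by simp [hT.perm_apply]] at this
    rw [this]; ring
  -- every point has a standard interval to its right, and one to its left
  have hR : ∀ x : ℝ, ∃ u v : ℝ, u ∈ zpows 2 ∧ u ≤ x ∧ x < v ∧
      ∃ (k : ℤ) (c : ℝ), ∀ y ∈ Set.Icc u v, h y = 2 ^ k * y + c := by
    intro x
    obtain ⟨L, hL⟩ := key ⌊x⌋
    have hp : (0 : ℝ) < 2 ^ L := by positivity
    have f0 := Int.floor_le x
    have f1 := Int.lt_floor_add_one x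
    have g0 := Int.floor_le ((x - ⌊x⌋) * 2 ^ L)
    have g1 := Int.lt_floor_add_one ((x - ⌊x⌋) * 2 ^ L)
    refine ⟨_, _, ?_, ?_, ?_, hL ⌊(x - ⌊x⌋) * 2 ^ L⌋ (Int.floor_nonneg.2 ?_) (Int.floor_lt.2 ?_)⟩
    · exact dy_add (dy_int _) (dy_div _ _)
    · rw [← le_sub_iff_add_le', div_le_iff₀ hp]; exact g0
    · rw [← sub_lt_iff_lt_add', lt_div_iff₀ hp]; exact g1
    · have : 0 ≤ x - ⌊x⌋ := by linarith
      positivity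
    · push_cast; exact mul_lt_of_lt_one_left hp (by linarith)
  have hLt : ∀ x : ℝ, ∃ u v : ℝ, u < x ∧ x ≤ v ∧
      ∃ (k : ℤ) (c : ℝ), ∀ y ∈ Set.Icc u v, h y = 2 ^ k * y + c := by
    intro x
    obtain ⟨L, hL⟩ := key (⌈x⌉ - 1)
    have hp : (0 : ℝ) < 2 ^ L := by positivity
    have f0 := Int.le_ceil x
    have f1 := Int.ceil_lt_add_one x
    obtain ⟨y, hy⟩ : ∃ y, y = x - (⌈x⌉ - 1 : ℤ) := ⟨_, rfl⟩
    have hy' : y = x - (⌈x⌉ - 1) := by rw [hy]; push_cast; rfl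
    have g0 := Int.le_ceil (y * 2 ^ L)
    have g1 := Int.ceil_lt_add_one (y * 2 ^ L)
    have hy0 : 0 < y := by linarith
    have hy1 : y ≤ 1 := by linarith
    refine ⟨_, _, ?_, ?_, hL (⌈y * 2 ^ L⌉ - 1) ?_ ?_⟩
    · rw [← lt_sub_iff_add_lt', div_lt_iff₀ hp, ← hy]; push_cast; linarith
    · rw [← sub_le_iff_le_add', le_div_iff₀ hp, ← hy]; push_cast; linarith
    · have : 0 < ⌈y * 2 ^ L⌉ := Int.ceil_pos.2 (by positivity)
      omega
    · have : ⌈y * 2 ^ L⌉ ≤ 2 ^ L := Int.ceil_le.2 (by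
        push_cast; exact mul_le_of_le_one_left hp.le hy1)
      omega
  refine ⟨hh.1, h.surjective, fun x => ?_, fun x => ?_, fun x hx => ?_, fun q hq => hh.dy hq⟩
  · obtain ⟨u, v, -, hu, hv, k, c, hk⟩ := hR x
    exact ⟨k, c, by
      filter_upwards [Icc_mem_nhdsGE hv] with y hy using hk y ⟨hu.trans hy.1, hy.2⟩⟩
  · obtain ⟨u, v, hu, hv, k, c, hk⟩ := hLt x
    exact ⟨k, c, by
      filter_upwards [Icc_mem_nhdsLE hu] with y hy using hk y ⟨hy.1, hy.2.trans hv⟩⟩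
  · obtain ⟨u, v, hud, hu, hv, k, c, hk⟩ := hR x
    have hu' : u < x := lt_of_le_of_ne hu fun h => hx (h ▸ hud)
    exact ⟨k, c, by filter_upwards [Icc_mem_nhds hu' hv] with y hy using hk y hy⟩

/-! ### Germs at the ends of the line -/

theorem IsN.good {h : Equiv.Perm ℝ} (hh : IsN h) : Good h := ⟨hh.pl, hh.perEnds⟩

theorem coe_eq_iff {x y : ℝ} : (x : AddCircle (1 : ℝ)) = y ↔ ∃ n : ℤ, x = y + n := by
  rw [← sub_eq_zero, ← AddCircle.coe_sub, AddCircle.coe_eq_zero_iff]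
  constructor
  · rintro ⟨n, hn⟩
    exact ⟨n, by simp at hn; linarith⟩
  · rintro ⟨n, hn⟩
    exact ⟨n, by simp; linarith⟩

theorem lift_int {H : ℝ → ℝ} (hp : ∀ x, H (x + 1) = H x + 1) (n : ℤ) (x : ℝ) :
    H (x + n) = H x + n := by
  have key : ∀ (n : ℕ) (x : ℝ), H (x + n) = H x + n := by
    intro n
    induction n with
    | zero => simp
    | succ n ih => intro x; push_cast; rw [← add_assoc, hp, ih]; ring
  obtain ⟨k, rfl | rfl⟩ := Int.eq_nat_or_neg n
  · exact_mod_cast key k x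
  · have := key k (x + (-(k : ℤ) : ℤ))
    push_cast at this ⊢
    rw [show x + -(k : ℝ) + k = x by ring] at this
    linarith

/-- The circle homeomorphism with a given lift. -/
theorem exists_circle_perm {H : ℝ → ℝ} (hm : StrictMono H) (hs : Function.Surjective H)
    (hp : ∀ x, H (x + 1) = H x + 1) :
    ∃ σ : Equiv.Perm (AddCircle (1 : ℝ)), ∀ x : ℝ, σ (x : AddCircle (1 : ℝ)) = (H x : ℝ) := by
  have hper : Function.Periodic (fun x => ((H x : ℝ) : AddCircle (1 : ℝ))) 1 := by
    intro x
    exact coe_eq_iff.2 ⟨1, by simp [hp]⟩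
  refine ⟨Equiv.ofBijective hper.lift ⟨?_, ?_⟩, fun x => hper.lift_coe x⟩
  · intro a b
    induction a using QuotientAddGroup.induction_on with | H x => ?_
    induction b using QuotientAddGroup.induction_on with | H y => ?_
    intro hab
    obtain ⟨n, hn⟩ := coe_eq_iff.1 (show ((H x : ℝ) : AddCircle (1 : ℝ)) = (H y : ℝ) from hab)
    rw [← lift_int hp] at hn
    exact coe_eq_iff.2 ⟨n, hm.injective hn⟩
  · intro b
    induction b using QuotientAddGroup.induction_on with | H y => ?_
    obtain ⟨x, rfl⟩ := hs y
    exact ⟨(x : AddCircle (1 : ℝ)), hper.lift_coe x⟩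

/-- The break set of the periodic map `H` is taken to be the set of points without a two-sided
affine germ. -/
theorem circPL_of_pl {H : ℝ → ℝ} (hH : PL H) (hp : ∀ x, H (x + 1) = H x + 1) :
    CircPL 2 1 H := by
  have hshift : ∀ x, ∀ n : ℤ, AffAt H (𝓝 (x + n)) → AffAt H (𝓝 x) := by
    intro x n h
    have ht : Tendsto (fun y : ℝ => y + n) (𝓝 x) (𝓝 (x + n)) :=
      (continuous_add_const (n : ℝ)).tendsto x
    obtain ⟨k, c, h⟩ := h
    refine ⟨k, 2 ^ k * n + c - n, ?_⟩
    filter_upwards [ht.eventually h] with y hy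
    rw [lift_int hp] at hy
    linear_combination hy
  refine ⟨{x | ¬ AffAt H (𝓝 x)}, ?_, fun x hx => ⟨fun h => hx ?_, fun h => hx ?_⟩, fun x hx => ?_,
    fun x hx => ?_⟩
  · refine (hH.finite_breaks 0 1).subset ?_
    rintro y ⟨h1, h2⟩
    exact ⟨⟨h2.1, h2.2.le⟩, h1⟩
  · exact hshift x 1 (by simpa using h)
  · exact hshift x (-1) (by simpa [← sub_eq_add_neg] using h)
  · by_contra hx'; exact hx (hH.two x hx')
  · have := affAt_nhds_iff.1 (not_not.1 hx)
    simpa using this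

theorem pl_of_circPL {H : ℝ → ℝ} (hm : StrictMono H) (hs : Function.Surjective H)
    (hB : CircPL 2 1 H) (hd : ∀ q ∈ zpows 2, H q ∈ zpows 2) : PL H := by
  obtain ⟨B, hfin, hper, hsub, haff⟩ := hB
  refine memPL_iff.1 ⟨hm, hs, ⟨B, hsub, ?_, haff⟩, hd⟩
  have hnat : ∀ n : ℕ, ∀ x ∈ B, x + n ∈ B ∧ x - n ∈ B := by
    intro n
    induction n with
    | zero => simp
    | succ n ih =>
      intro x hx
      push_cast
      exact ⟨by rw [← add_assoc]; exact (hper _ (ih x hx).1).1,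
        by rw [← sub_sub]; exact (hper _ (ih x hx).2).2⟩
  have hint : ∀ n : ℤ, ∀ x ∈ B, x - n ∈ B := by
    intro n x hx
    obtain ⟨k, rfl | rfl⟩ := Int.eq_nat_or_neg n
    · exact_mod_cast (hnat k x hx).2
    · have := (hnat k x hx).1
      push_cast; rwa [sub_neg_eq_add]
  rw [locDiscrete_iff]
  intro x
  have hf : (B ∩ Set.Ioo (x - 1) (x + 1)).Finite := by
    refine ((Set.finite_Icc (⌊x⌋ - 2) (⌊x⌋ + 2)).biUnion
      (fun n _ => hfin.image (fun y => y + (n : ℝ)))).subset ?_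
    rintro y ⟨hyB, hy⟩
    have f0 := Int.floor_le x
    have f1 := Int.lt_floor_add_one x
    have g0 := Int.floor_le y
    have g1 := Int.lt_floor_add_one y
    refine Set.mem_biUnion (x := ⌊y⌋) ⟨?_, ?_⟩ ⟨y - ⌊y⌋, ⟨hint _ _ hyB, ?_, ?_⟩, by simp⟩
    · have : ((⌊x⌋ - 2 : ℤ) : ℝ) < ⌊y⌋ := by push_cast; linarith [hy.1]
      exact_mod_cast this.le
    · have : (⌊y⌋ : ℝ) < (⌊x⌋ + 2 : ℤ) := by push_cast; linarith [hy.2]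
      exact_mod_cast this.le
    · linarith
    · linarith
  have hcl : ((B ∩ Set.Ioo (x - 1) (x + 1)) \ {x})ᶜ ∈ 𝓝 x :=
    hf.sdiff.isClosed.isOpen_compl.mem_nhds (by simp)
  rw [eventually_nhdsWithin_iff]
  filter_upwards [hcl, Ioo_mem_nhds (sub_one_lt x) (lt_add_one x)] with y h1 h2 h3 h4
  exact h1 ⟨⟨h4, h2⟩, h3⟩

/-- The circle map `σ` is induced by `h` near the end `s∞` of the line, where `s = ±1`. -/
def EndMap (s : ℝ) (h : ℝ → ℝ) (σ : Equiv.Perm (AddCircle (1 : ℝ))) : Prop :=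
  ∃ M : ℝ, ∀ x : ℝ, M < s * x → σ (x : AddCircle (1 : ℝ)) = (h x : ℝ)

theorem sign_large {s : ℝ} (hs : s = 1 ∨ s = -1) (M x : ℝ) :
    ∃ n : ℕ, M < s * (x + s * n) := by
  obtain ⟨n, hn⟩ := exists_nat_gt (M - s * x)
  refine ⟨n, ?_⟩
  rcases hs with rfl | rfl <;> linarith

theorem EndMap.unique {s : ℝ} (hs : s = 1 ∨ s = -1) {h : ℝ → ℝ}
    {σ τ : Equiv.Perm (AddCircle (1 : ℝ))} (h1 : EndMap s h σ) (h2 : EndMap s h τ) : σ = τ := by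
  obtain ⟨M, hM⟩ := h1
  obtain ⟨K, hK⟩ := h2
  ext a
  induction a using QuotientAddGroup.induction_on with | H x => ?_
  obtain ⟨n, hn⟩ := sign_large hs (max M K) x
  have e : (x : AddCircle (1 : ℝ)) = (x + s * n : ℝ) := by
    rcases hs with rfl | rfl
    · exact coe_eq_iff.2 ⟨-n, by push_cast; ring⟩
    · exact coe_eq_iff.2 ⟨n, by push_cast; ring⟩
  change σ (x : AddCircle (1 : ℝ)) = τ (x : AddCircle (1 : ℝ))
  rw [e, hM _ ((le_max_left _ _).trans_lt hn), hK _ ((le_max_right _ _).trans_lt hn)]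

theorem EndMap.mul {s : ℝ} (hs : s = 1 ∨ s = -1) {g h : Equiv.Perm ℝ} (hm : StrictMono h)
    {σ τ : Equiv.Perm (AddCircle (1 : ℝ))} (h1 : EndMap s g σ) (h2 : EndMap s h τ) :
    EndMap s ⇑(g * h) (σ * τ) := by
  obtain ⟨M, hM⟩ := h1
  obtain ⟨K, hK⟩ := h2
  obtain ⟨K', -, hp, hn⟩ := exists_bound hm h.surjective M
  refine ⟨max K K', fun x hx => ?_⟩
  rw [Equiv.Perm.mul_apply, hK x ((le_max_left _ _).trans_lt hx), hM, Equiv.Perm.mul_apply]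
  have hx' := (le_max_right K K').trans_lt hx
  rcases hs with rfl | rfl
  · rw [one_mul] at *; exact hp x hx'
  · have := hn x (by linarith); linarith

/-- The map `h` induces an element of `T` near each end: its lift is obtained by moving a point far
out towards the end by an integer, applying `h`, and moving back. -/
theorem Good.exists_endMap {s : ℝ} (hs : s = 1 ∨ s = -1) {h : Equiv.Perm ℝ} (hh : Good h) :
    ∃ σ : Equiv.Perm (AddCircle (1 : ℝ)), MemT 2 1 σ ∧ EndMap s h σ := by
  obtain ⟨hPL, M, hM⟩ := hh
  have hM' : ∀ x, |M| < |x| → h (x + 1) = h x + 1 := fun x hx => hM x ((le_abs_self M).trans_lt hx)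
  choose N hN using fun x => sign_large hs |M| x
  -- the lift agrees with any translate of `h` far enough along the end
  obtain ⟨H, hHdef⟩ : ∃ H : ℝ → ℝ, ∀ x, H x = h (x + s * N x) - s * N x := ⟨_, fun _ => rfl⟩
  have hH : ∀ (n : ℕ) (x : ℝ), |M| < s * (x + s * n) → H x = h (x + s * n) - s * n := by
    intro n x hx
    rw [hHdef]
    rcases le_total (N x) n with hle | hle
    · obtain ⟨k, rfl⟩ := Nat.exists_eq_add_of_le hle
      have := perEnds_nat hM' hs k (hN x)
      push_cast
      rw [show x + s * ((N x : ℝ) + k) = x + s * N x + s * k by ring, this]; ring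
    · obtain ⟨k, hk⟩ := Nat.exists_eq_add_of_le hle
      have := perEnds_nat hM' hs k hx
      rw [hk]
      push_cast
      rw [show x + s * ((n : ℝ) + k) = x + s * n + s * k by ring, this]; ring
  have hss : s * s = 1 := by rcases hs with rfl | rfl <;> norm_num
  have hmono : ∀ (x : ℝ) (n k : ℕ), n ≤ k → s * (x + s * n) ≤ s * (x + s * k) := by
    intro x n k hnk
    have : (n : ℝ) ≤ k := by exact_mod_cast hnk
    rw [mul_add, mul_add, ← mul_assoc, ← mul_assoc, hss]; linarith
  have hloc : ∀ x : ℝ, ∃ n : ℕ, ∀ᶠ y in 𝓝 x, H y = h (y + s * n) - s * n := by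
    intro x
    refine ⟨N x, ?_⟩
    have hc : Continuous fun y : ℝ => s * (y + s * N x) := by fun_prop
    filter_upwards [(hc.tendsto x).eventually (eventually_gt_nhds (hN x))] with y hy using hH _ _ hy
  have hds : s ∈ zpows 2 := by
    rcases hs with rfl | rfl
    · simpa using dy_int 1
    · simpa using dy_int (-1)
  have hdn : ∀ n : ℕ, s * n ∈ zpows 2 := fun n => dy_mul hds (by exact_mod_cast dy_int n)
  have hpl : ∀ n : ℕ, PL (fun y => h (y + s * n) - s * n) := fun n =>
    (pl_translate (dy_neg (hdn n))).comp (hPL.comp (pl_translate (hdn n)))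
  have hHPL : PL H := by
    refine ⟨fun x y hxy => ?_, fun y => ?_, fun x => ?_, fun x => ?_, fun x hx => ?_,
      fun q hq => ?_⟩
    · rw [hH (max (N x) (N y)) x ((hN x).trans_le (hmono x _ _ (le_max_left _ _))),
        hH (max (N x) (N y)) y ((hN y).trans_le (hmono y _ _ (le_max_right _ _)))]
      exact (hpl _).mono hxy
    · -- a preimage is found by following the inverse of `h` from far out along the end
      obtain ⟨K, -, hp, hn⟩ := exists_bound hPL.inv.mono hPL.inv.surj |M|
      obtain ⟨n, hyn⟩ := sign_large hs K y
      refine ⟨h⁻¹ (y + s * n) - s * n, ?_⟩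
      rw [hH n]
      · simp
      · rw [sub_add_cancel]
        rcases hs with rfl | rfl
        · rw [one_mul] at *; exact hp _ hyn
        · have := hn (y + -1 * n) (by linarith); linarith
    · obtain ⟨n, hn⟩ := hloc x
      exact ((hpl n).right x).congr (nhdsWithin_le_nhds hn)
    · obtain ⟨n, hn⟩ := hloc x
      exact ((hpl n).left x).congr (nhdsWithin_le_nhds hn)
    · obtain ⟨n, hn⟩ := hloc x
      exact ((hpl n).two x hx).congr hn
    · rw [hHdef]; exact (hpl _).dy q hq
  have hper : ∀ x, H (x + 1) = H x + 1 := by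
    intro x
    have a1 := (hN x).trans_le (hmono x _ _ (le_max_left (N x) (N (x + 1))))
    have a2 := (hN (x + 1)).trans_le (hmono (x + 1) _ _ (le_max_right (N x) (N (x + 1))))
    rw [hH _ _ a1, hH _ _ a2, add_right_comm, hM' _ (a1.trans_le _)]
    · ring
    · rcases hs with rfl | rfl
      · rw [one_mul]; exact le_abs_self _
      · rw [neg_one_mul]; exact neg_le_abs _
  obtain ⟨σ, hσ⟩ := exists_circle_perm hHPL.mono hHPL.surj hper
  refine ⟨σ, ⟨H, hσ, hper, hHPL.mono, hHPL.surj, circPL_of_pl hHPL hper, hHPL.dy⟩, |M|,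
    fun x hx => ?_⟩
  rw [hσ, hH 0 x (by simpa using hx)]
  simp

/-- A continuous map congruent to the identity modulo `1` on an interval is a translation there. -/
theorem const_of_int {h : ℝ → ℝ} (hc : Continuous h) {S : Set ℝ} (hS : S.OrdConnected)
    (hne : S.Nonempty) (hi : ∀ x ∈ S, ∃ n : ℤ, h x = x + n) : ∃ n : ℤ, ∀ x ∈ S, h x = x + n := by
  have key : ∀ x ∈ S, ∀ y ∈ S, ∀ n m : ℤ, h x = x + n → h y = y + m → ¬ n < m := by
    intro x hx y hy n m hn hm hnm
    have h1 : (n : ℝ) + 1 ≤ m := by exact_mod_cast hnm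
    obtain ⟨z, hz, hz'⟩ := hS.isPreconnected.intermediate_value hx hy
      (f := fun x => h x - x) (by fun_prop)
      (show (n : ℝ) + 1 / 2 ∈ Set.Icc _ _ by constructor <;> linarith)
    obtain ⟨p, hp⟩ := hi z hz
    have e : (p : ℝ) = n + 1 / 2 := by simp only at hz'; linarith
    have e2 : ((2 * p : ℤ) : ℝ) = (2 * n + 1 : ℤ) := by push_cast; linarith
    have : 2 * p = 2 * n + 1 := by exact_mod_cast e2
    omega
  obtain ⟨x, hx⟩ := hne
  obtain ⟨n, hn⟩ := hi x hx
  refine ⟨n, fun y hy => ?_⟩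
  obtain ⟨m, hm⟩ := hi y hy
  have := key x hx y hy n m hn hm
  have := key y hy x hx m n hm hn
  rw [hm, show m = n by omega]

theorem memF_of_end_one {h : Equiv.Perm ℝ} (hh : Good h) (h1 : EndMap (-1) h 1)
    (h2 : EndMap 1 h 1) : MemF 2 h := by
  obtain ⟨M, hM⟩ := h1
  obtain ⟨K, hK⟩ := h2
  obtain ⟨j, hj⟩ := const_of_int hh.1.cont (S := Set.Iio (-M)) Set.ordConnected_Iio
    Set.nonempty_Iio fun x hx => coe_eq_iff.1 (hM x (by linarith [Set.mem_Iio.1 hx])).symm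
  obtain ⟨i, hi⟩ := const_of_int hh.1.cont (S := Set.Ioi K) Set.ordConnected_Ioi
    Set.nonempty_Ioi fun x hx => coe_eq_iff.1 (hK x (by simpa using hx)).symm
  refine memF_iff.2 ⟨hh.1, i, j, max M K, fun x hx => hi x ((le_max_right _ _).trans_lt hx),
    fun x hx => hj x ?_⟩
  have := le_max_left M K
  rw [Set.mem_Iio]; linarith

theorem end_one_of_memF {h : Equiv.Perm ℝ} (hh : MemF 2 h) : EndMap (-1) h 1 ∧ EndMap 1 h 1 := by
  obtain ⟨-, i, j, M, h1, h2⟩ := memF_iff.1 hh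
  refine ⟨⟨M, fun x hx => (coe_eq_iff.2 ⟨j, h2 x (by linarith)⟩).symm⟩,
    ⟨M, fun x hx => (coe_eq_iff.2 ⟨i, h1 x (by linarith)⟩).symm⟩⟩

/-- An element of `T` is induced near either end by a homeomorphism whose germ at the other end is
an integer translation. -/
theorem exists_of_memT {t : Equiv.Perm (AddCircle (1 : ℝ))} (ht : MemT 2 1 t) :
    (∃ h : Equiv.Perm ℝ, Good h ∧ EndMap (-1) h t ∧ EndMap 1 h 1) ∧
    ∃ h : Equiv.Perm ℝ, Good h ∧ EndMap (-1) h 1 ∧ EndMap 1 h t := by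
  obtain ⟨F₀, hF₀, hper₀, hm₀, hs₀, hc₀, hd₀⟩ := ht
  have hPL₀ := pl_of_circPL hm₀ hs₀ hc₀ hd₀
  -- normalise the lift so that `0 ≤ F 0 < 1`
  obtain ⟨F, hF, hper, hPL, c0, c1⟩ : ∃ F : ℝ → ℝ, (∀ x : ℝ, t (x : AddCircle (1 : ℝ)) = (F x : ℝ)) ∧
      (∀ x, F (x + 1) = F x + 1) ∧ PL F ∧ 0 ≤ F 0 ∧ F 0 < 1 := by
    refine ⟨fun x => F₀ x + (-⌊F₀ 0⌋ : ℤ), fun x => ?_, fun x => ?_,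
      (pl_translate (dy_int _)).comp hPL₀, ?_, ?_⟩
    · rw [hF₀]; exact coe_eq_iff.2 ⟨⌊F₀ 0⌋, by push_cast; ring⟩
    · simp only [hper₀]; ring
    · have := Int.floor_le (F₀ 0); push_cast; linarith
    · have := Int.lt_floor_add_one (F₀ 0); push_cast; linarith
  have d0 : (0 : ℝ) ∈ zpows 2 := by simpa using dy_int 0
  have d1 : (1 : ℝ) ∈ zpows 2 := by simpa using dy_int 1
  have hcd : F 0 ∈ zpows 2 := hPL.dy 0 d0
  set c := F 0 with hc
  have hA : PL (fun x => 2 ^ (1 : ℤ) * x + c) := pl_affine 1 hcd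
  constructor
  · have e1 : (2 : ℝ) ^ (1 : ℤ) * (1 - c) + c = (1 - c) + 1 := by rw [zpow_one]; ring
    have h1 := hA.glue (pl_translate d1) (dy_sub d1 hcd) e1
    have e2 : F 0 = glue (1 - c) (fun x => 2 ^ (1 : ℤ) * x + c) (fun x => x + 1) 0 := by
      rw [glue_le (by linarith), zpow_one]; ring
    have h2 := hPL.glue h1 d0 e2
    have hr : ∀ x, 1 < x → h2.perm x = x + 1 := fun x hx => by
      rw [h2.perm_apply, glue_ge e2 (by linarith), glue_ge e1 (by linarith)]
    have hl : ∀ x, x < 0 → h2.perm x = F x := fun x hx => by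
      rw [h2.perm_apply, glue_le hx.le]
    refine ⟨h2.perm, ⟨h2, 1, fun x hx => ?_⟩, ⟨0, fun x hx => ?_⟩, ⟨1, fun x hx => ?_⟩⟩
    · rcases lt_abs.1 hx with hx | hx
      · rw [hr _ (by linarith), hr _ hx]
      · rw [hl _ (by linarith), hl _ (by linarith), hper]
    · rw [hl _ (by linarith), hF]
    · rw [hr _ (by linarith)]
      exact coe_eq_iff.2 ⟨-1, by push_cast; ring⟩
  · have e1 : (2 : ℝ) ^ (1 : ℤ) * 0 + c = F 0 := by rw [hc]; ring
    have h1 := hA.glue hPL d0 e1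
    have e2 : -c = glue 0 (fun x => 2 ^ (1 : ℤ) * x + c) F (-c) := by
      rw [glue_le (by linarith), zpow_one]; ring
    have h2 := pl_id.glue h1 (dy_neg hcd) e2
    have hl : ∀ x, x < -1 → h2.perm x = x := fun x hx => by
      rw [h2.perm_apply, glue_le (by linarith)]
    have hr : ∀ x, 0 < x → h2.perm x = F x := fun x hx => by
      rw [h2.perm_apply, glue_ge e2 (by linarith), glue_ge e1 hx.le]
    refine ⟨h2.perm, ⟨h2, 2, fun x hx => ?_⟩, ⟨1, fun x hx => ?_⟩, ⟨0, fun x hx => ?_⟩⟩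
    · rcases lt_abs.1 hx with hx | hx
      · rw [hr _ (by linarith), hr _ (by linarith), hper]
      · rw [hl _ (by linarith), hl _ (by linarith)]
    · rw [hl _ (by linarith)]; rfl
    · rw [hr _ (by linarith), hF]

/-- The actions near the two ends define a homomorphism to `T × T`. -/
theorem exists_end_hom : ∃ π : ↥NoF2 →* ↥Tgrp × ↥Tgrp, ∀ h : ↥NoF2,
    EndMap (-1) (h : Equiv.Perm ℝ) (π h).1 ∧ EndMap 1 (h : Equiv.Perm ℝ) (π h).2 := by
  have hg : ∀ h : ↥NoF2, Good (h : Equiv.Perm ℝ) := fun h => (mem_NoF2.1 h.2).good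
  choose σ hσT hσ using fun h : ↥NoF2 => (hg h).exists_endMap (Or.inr rfl)
  choose τ hτT hτ using fun h : ↥NoF2 => (hg h).exists_endMap (Or.inl rfl)
  refine ⟨MonoidHom.mk' (fun h => (⟨σ h, Subgroup.subset_closure (hσT h)⟩,
    ⟨τ h, Subgroup.subset_closure (hτT h)⟩)) fun g h => ?_, fun h => ⟨hσ h, hτ h⟩⟩
  refine Prod.ext (Subtype.ext ?_) (Subtype.ext ?_)
  · exact (hσ (g * h)).unique (Or.inr rfl) ((hσ g).mul (Or.inr rfl) (hg h).1.mono (hσ h))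
  · exact (hτ (g * h)).unique (Or.inl rfl) ((hτ g).mul (Or.inl rfl) (hg h).1.mono (hτ h))

/-- `T` is defined as a subgroup generated by circle maps, so surjectivity is checked on the
generators of each factor. -/
theorem end_hom_surjective {π : ↥NoF2 →* ↥Tgrp × ↥Tgrp} (hπ : ∀ h : ↥NoF2,
    EndMap (-1) (h : Equiv.Perm ℝ) (π h).1 ∧ EndMap 1 (h : Equiv.Perm ℝ) (π h).2) :
    Function.Surjective π := by
  have key : ∀ h : Equiv.Perm ℝ, Good h → ∀ a b : ↥Tgrp, EndMap (-1) h a → EndMap 1 h b →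
      (a, b) ∈ π.range := by
    intro h hh a b ha hb
    refine ⟨⟨h, mem_NoF2.2 hh.isN⟩, Prod.ext (Subtype.ext ?_) (Subtype.ext ?_)⟩
    · exact (hπ _).1.unique (Or.inr rfl) ha
    · exact (hπ _).2.unique (Or.inl rfl) hb
  have key1 : ∀ (t : Equiv.Perm (AddCircle (1 : ℝ))) (ht : t ∈ Tgrp),
      ((⟨t, ht⟩, 1) : ↥Tgrp × ↥Tgrp) ∈ π.range ∧ ((1, ⟨t, ht⟩) : ↥Tgrp × ↥Tgrp) ∈ π.range := by
    intro t ht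
    induction ht using Subgroup.closure_induction with
    | mem t ht =>
      obtain ⟨⟨h, hh, h1, h2⟩, ⟨g, hg, g1, g2⟩⟩ := exists_of_memT ht
      exact ⟨key h hh _ _ h1 h2, key g hg _ _ g1 g2⟩
    | one => exact ⟨π.range.one_mem, π.range.one_mem⟩
    | mul x y hx hy ihx ihy =>
      exact ⟨by have := π.range.mul_mem ihx.1 ihy.1; rw [Prod.mk_mul_mk, one_mul] at this; exact this,
        by have := π.range.mul_mem ihx.2 ihy.2; rw [Prod.mk_mul_mk, one_mul] at this; exact this⟩
    | inv x hx ih =>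
      exact ⟨by have := π.range.inv_mem ih.1; rw [Prod.inv_mk, inv_one] at this; exact this,
        by have := π.range.inv_mem ih.2; rw [Prod.inv_mk, inv_one] at this; exact this⟩
  rintro ⟨a, b⟩
  have := π.range.mul_mem (key1 a a.2).1 (key1 b b.2).2
  simpa using this

end

/-- `F₂` is a normal subgroup of `N_o(F₂)` with quotient `T_{2,1} × T_{2,1}`:
there is a surjective homomorphism `π : N_o(F₂) → T_{2,1} × T_{2,1}` whose kernel is exactly
`F₂`, i.e. a short exact sequence `1 → F₂ → N_o(F₂) → T_{2,1} × T_{2,1} → 1`. The map `π` is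
induced by the actions near `-∞` and `+∞`: each `h ∈ N_o(F₂)` satisfies `h(x+1) = h(x)+1`
for `|x|` large and hence induces a homeomorphism of `ℝ/ℤ` at each end. -/
theorem stmt_17 :
    (∀ f : Equiv.Perm ℝ, MemF 2 ⇑f → f ∈ NoF2) ∧
    ∃ π : ↥NoF2 →* ↥Tgrp × ↥Tgrp,
      Function.Surjective π ∧
      (∀ h : ↥NoF2, π h = 1 ↔ MemF 2 ⇑(h : Equiv.Perm ℝ)) ∧
      (∀ h : ↥NoF2, ∃ M : ℝ, ∀ x : ℝ, M < |x| →
        (h : Equiv.Perm ℝ) (x + 1) = (h : Equiv.Perm ℝ) x + 1) ∧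
      (∀ h : ↥NoF2, ∃ M : ℝ,
        (∀ x : ℝ, x < -M →
          (((π h).1 : Equiv.Perm (AddCircle (1 : ℝ))))
              ((x : ℝ) : AddCircle (1 : ℝ)) =
            ((((h : Equiv.Perm ℝ) x : ℝ)) : AddCircle (1 : ℝ))) ∧
        (∀ x : ℝ, M < x →
          (((π h).2 : Equiv.Perm (AddCircle (1 : ℝ))))
              ((x : ℝ) : AddCircle (1 : ℝ)) =
            ((((h : Equiv.Perm ℝ) x : ℝ)) : AddCircle (1 : ℝ)))) := by
  obtain ⟨π, hπ⟩ := exists_end_hom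
  refine ⟨fun f hf => mem_NoF2.2 (MemF.good hf).isN, π, end_hom_surjective hπ, fun h => ⟨fun h1 => ?_,
    fun hF => ?_⟩, fun h => (mem_NoF2.1 h.2).perEnds, fun h => ?_⟩
  · exact memF_of_end_one (mem_NoF2.1 h.2).good (by simpa [h1] using (hπ h).1)
      (by simpa [h1] using (hπ h).2)
  · exact Prod.ext (Subtype.ext ((hπ h).1.unique (Or.inr rfl) (end_one_of_memF hF).1))
      (Subtype.ext ((hπ h).2.unique (Or.inl rfl) (end_one_of_memF hF).2))
  · obtain ⟨⟨M, hM⟩, K, hK⟩ := hπ h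
    have h1 := le_max_left M K
    have h2 := le_max_right M K
    exact ⟨max M K, fun x hx => hM x (by linarith), fun x hx => hK x (by linarith)⟩
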